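/- arXiv:math/0307004 — 3 statements merged into one kernel-verified Lean document; each statement's English description precedes it below -/
import Mathlib

section
/- Let G be a connected open subset of ℝ^N and v a nontrivial real-valued solution of Δv + k²v = 0 on G. Let A₁,…,Aₙ be finitely many nodal domains of v and A the interior of the closure of their union. Then for every x ∈ ∂A ∩ G and every r > 0 with B_r(x) ⊆ G, there exists y ∈ B_r(x) ∩ ∂A with ∇v(y) ≠ 0. -/
open Metric Set

noncomputable def lap {N : ℕ} (v : EuclideanSpace ℝ (Fin N) → ℝ)
    (x : EuclideanSpace ℝ (Fin N)) : ℝ :=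
  ∑ i, iteratedFDeriv ℝ 2 v x ![EuclideanSpace.single i 1, EuclideanSpace.single i 1]

open Topology

/-- Local dimension bound for a set on which a strictly differentiable map is constant. -/
theorem dimH_local {E F : Type*} [NormedAddCommGroup E] [InnerProductSpace ℝ E]
    [FiniteDimensional ℝ E] [NormedAddCommGroup F] [NormedSpace ℝ F]
    (f : E → F) (L : E →L[ℝ] F) (p : E) (hf : HasStrictFDerivAt f L p)
    (s : Set E) (hs : ∀ x ∈ s, f x = 0) :
    ∃ t ∈ 𝓝[s] p, dimH t ≤ (Module.finrank ℝ L.ker : ENNReal) := by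
  set K : Submodule ℝ E := L.ker with hK
  let P : E →L[ℝ] K := K.orthogonalProjectionOnto
  let Q : E →L[ℝ] (K × F) := P.prod L
  have hQ : LinearMap.ker (Q : E →ₗ[ℝ] (K × F)) = ⊥ := by
    rw [LinearMap.ker_eq_bot']
    intro h hh
    have h1 : P h = 0 := congrArg Prod.fst hh
    have h2 : L h = 0 := congrArg Prod.snd hh
    have h3 : h ∈ K := by rw [hK]; simpa using h2
    have h4 : ((P h : K) : E) = h := by
      have := Submodule.orthogonalProjectionOnto_mem_subspace_eq_self (K := K) ⟨h, h3⟩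
      exact congrArg Subtype.val this
    rw [← h4, h1]; rfl
  obtain ⟨C, hC0, hC⟩ := LinearMap.exists_antilipschitzWith (Q : E →ₗ[ℝ] (K × F)) hQ
  have hc : (0 : NNReal) < (2 * C)⁻¹ := by positivity
  obtain ⟨U, hU, hUa⟩ := hf.approximates_deriv_on_nhds (Or.inr hc)
  refine ⟨U ∩ s, Filter.inter_mem (mem_nhdsWithin_of_mem_nhds hU) self_mem_nhdsWithin, ?_⟩
  let g : ↥(U ∩ s) → K := fun x => P x
  have hg : AntilipschitzWith C g := by
    refine AntilipschitzWith.of_le_mul_dist ?_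
    rintro ⟨x, hxU, hxs⟩ ⟨y, hyU, hys⟩
    have h1 := hC.le_mul_dist x y
    have h2 := hUa x hxU y hyU
    rw [hs x hxs, hs y hys, sub_self, zero_sub, norm_neg] at h2
    have h3 : dist (Q x) (Q y) = max (dist (P x) (P y)) (dist (L x) (L y)) := rfl
    have h5 : dist (L x) (L y) = ‖L (x - y)‖ := by rw [dist_eq_norm, map_sub]
    have hCr : (0:ℝ) < C := hC0
    have h1' : dist x y ≤ C * max (dist (P x) (P y)) (dist (L x) (L y)) := h1
    have h4 : (C:ℝ) * dist (L x) (L y) ≤ dist x y / 2 := by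
      rw [h5]
      calc (C:ℝ) * ‖L (x - y)‖ ≤ C * (((2 * C)⁻¹ : NNReal) * ‖x - y‖) := by gcongr
        _ = dist x y / 2 := by
          rw [dist_eq_norm]; push_cast; field_simp
    change dist x y ≤ C * dist (P x) (P y)
    rcases le_total (dist (P x) (P y)) (dist (L x) (L y)) with h | h
    · rw [max_eq_right h] at h1'
      have : dist x y = 0 := le_antisymm (by linarith) dist_nonneg
      rw [this]; positivity
    · rwa [max_eq_left h] at h1'
  calc dimH (U ∩ s) = dimH (Subtype.val '' (univ : Set ↥(U ∩ s))) := by simp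
    _ = dimH (univ : Set ↥(U ∩ s)) := isometry_subtype_coe.dimH_image _
    _ ≤ dimH (g '' univ) := hg.le_dimH_image _
    _ ≤ dimH (univ : Set K) := dimH_mono (subset_univ _)
    _ = _ := Real.dimH_univ_eq_finrank _

theorem rank_one {V W : Type*} [AddCommGroup V] [Module ℝ V] [FiniteDimensional ℝ V]
    [AddCommGroup W] [Module ℝ W] (f : V →ₗ[ℝ] W)
    (h : Module.finrank ℝ V ≤ Module.finrank ℝ (LinearMap.ker f) + 1) :
    ∃ φ : W, ∀ a, ∃ c : ℝ, f a = c • φ := by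
  have h0 := LinearMap.finrank_range_add_finrank_ker f
  have h1 : Module.finrank ℝ (LinearMap.range f) ≤ 1 := by omega
  obtain ⟨⟨φ, hφ⟩, hc⟩ := finrank_le_one_iff.1 h1
  refine ⟨φ, fun a => ?_⟩
  obtain ⟨c, hc⟩ := hc ⟨f a, ⟨a, rfl⟩⟩
  exact ⟨c, (congrArg Subtype.val hc).symm⟩

/-- A nonzero symmetric bilinear form of trace zero has rank at least two. -/
theorem ker_bound {N : ℕ}
    (L : EuclideanSpace ℝ (Fin N) →L[ℝ] (EuclideanSpace ℝ (Fin N) →L[ℝ] ℝ))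
    (hsymm : ∀ a b, L a b = L b a) (hL : L ≠ 0)
    (htr : ∑ i, L (EuclideanSpace.single i 1) (EuclideanSpace.single i 1) = 0) :
    Module.finrank ℝ L.ker + 2 ≤ N := by
  by_contra hcon
  obtain ⟨φ, hc'⟩ := rank_one
    (L : EuclideanSpace ℝ (Fin N) →ₗ[ℝ] (EuclideanSpace ℝ (Fin N) →L[ℝ] ℝ)) (by
      rw [finrank_euclideanSpace_fin]
      change N ≤ Module.finrank ℝ L.ker + 1
      omega)
  replace hc' : ∀ a, ∃ c : ℝ, L a = c • φ := hc'
  choose c hc using hc'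
  apply hL
  by_cases hφ0 : φ = 0
  · ext a b; simp [hc, hφ0]
  obtain ⟨g, hg⟩ : ∃ g, φ g ≠ 0 := by
    by_contra hne
    push Not at hne
    exact hφ0 (by ext a; simpa using hne a)
  have hs : ∀ a, c a = c g / φ g * φ a := by
    intro a
    have := hsymm a g
    simp only [hc, _root_.smul_apply, smul_eq_mul] at this
    field_simp
    linarith
  have ht : c g / φ g * ∑ i, (φ (EuclideanSpace.single i 1)) ^ 2 = 0 := by
    rw [← htr, Finset.mul_sum]
    refine Finset.sum_congr rfl fun i _ => ?_
    rw [hc, _root_.smul_apply, smul_eq_mul, hs (EuclideanSpace.single i 1)]; ring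
  rcases mul_eq_zero.1 ht with h0 | h0
  · ext a b; simp [hc, hs a, h0]
  · exfalso
    rw [Finset.sum_eq_zero_iff_of_nonneg (fun i _ => sq_nonneg _)] at h0
    apply hφ0
    have : (φ : EuclideanSpace ℝ (Fin N) →ₗ[ℝ] ℝ) = 0 := by
      refine (EuclideanSpace.basisFun (Fin N) ℝ).toBasis.ext fun i => ?_
      have := h0 i (Finset.mem_univ _)
      simpa using this
    ext a
    exact LinearMap.congr_fun this a

/-- Analytic solutions of the Helmholtz equation on `G`. -/
def Sol {N : ℕ} (G : Set (EuclideanSpace ℝ (Fin N))) (k : ℝ)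
    (u : EuclideanSpace ℝ (Fin N) → ℝ) : Prop :=
  AnalyticOnNhd ℝ u G ∧ ∀ x ∈ G, lap u x + k ^ 2 * u x = 0

theorem lap_congr {N : ℕ} {u w : EuclideanSpace ℝ (Fin N) → ℝ} {x : EuclideanSpace ℝ (Fin N)}
    (h : u =ᶠ[𝓝 x] w) : lap u x = lap w x := by
  simp only [lap, (Filter.EventuallyEq.iteratedFDeriv (𝕜 := ℝ) h 2).eq_of_nhds]

theorem Sol.congr {N : ℕ} {G : Set (EuclideanSpace ℝ (Fin N))} (hG : IsOpen G) {k : ℝ}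
    {u w : EuclideanSpace ℝ (Fin N) → ℝ} (hu : Sol G k u) (h : EqOn u w G) : Sol G k w := by
  have he : ∀ x ∈ G, u =ᶠ[𝓝 x] w := fun x hx => h.eventuallyEq_of_mem (hG.mem_nhds hx)
  refine ⟨fun x hx => (hu.1 x hx).congr (he x hx), fun x hx => ?_⟩
  rw [← lap_congr (he x hx), ← h hx]
  exact hu.2 x hx

/-- directional derivative -/
noncomputable def dd {N : ℕ} (w : EuclideanSpace ℝ (Fin N)) (u : EuclideanSpace ℝ (Fin N) → ℝ) :
    EuclideanSpace ℝ (Fin N) → ℝ := fun y => fderiv ℝ u y w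

theorem dd_analytic {N : ℕ} {G : Set (EuclideanSpace ℝ (Fin N))}
    {u : EuclideanSpace ℝ (Fin N) → ℝ} (hu : AnalyticOnNhd ℝ u G) (w : EuclideanSpace ℝ (Fin N)) :
    AnalyticOnNhd ℝ (dd w u) G := fun x hx =>
  ((ContinuousLinearMap.apply ℝ ℝ w).analyticAt _).comp (hu.fderiv x hx)

theorem dd_dd {N : ℕ} {G : Set (EuclideanSpace ℝ (Fin N))}
    {u : EuclideanSpace ℝ (Fin N) → ℝ} (hu : AnalyticOnNhd ℝ u G) (a b : EuclideanSpace ℝ (Fin N))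
    {x : EuclideanSpace ℝ (Fin N)} (hx : x ∈ G) :
    dd a (dd b u) x = fderiv ℝ (fderiv ℝ u) x a b := by
  have h := (hu.fderiv x hx).differentiableAt.hasFDerivAt
  have h2 := ((ContinuousLinearMap.apply ℝ ℝ b).hasFDerivAt.comp x h).fderiv
  change fderiv ℝ (⇑(ContinuousLinearMap.apply ℝ ℝ b) ∘ fderiv ℝ u) x a = _
  rw [h2]; rfl

theorem snd_symm {N : ℕ} {G : Set (EuclideanSpace ℝ (Fin N))}
    {u : EuclideanSpace ℝ (Fin N) → ℝ} (hu : AnalyticOnNhd ℝ u G) (a b : EuclideanSpace ℝ (Fin N))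
    {x : EuclideanSpace ℝ (Fin N)} (hx : x ∈ G) :
    fderiv ℝ (fderiv ℝ u) x a b = fderiv ℝ (fderiv ℝ u) x b a :=
  ((hu x hx).contDiffAt (n := ⊤)).isSymmSndFDerivAt_of_omega a b

theorem dd_comm {N : ℕ} {G : Set (EuclideanSpace ℝ (Fin N))}
    {u : EuclideanSpace ℝ (Fin N) → ℝ} (hu : AnalyticOnNhd ℝ u G) (a b : EuclideanSpace ℝ (Fin N)) :
    EqOn (dd a (dd b u)) (dd b (dd a u)) G := fun x hx => by
  rw [dd_dd hu _ _ hx, dd_dd hu _ _ hx, snd_symm hu _ _ hx]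

theorem dd_congr {N : ℕ} {G : Set (EuclideanSpace ℝ (Fin N))} (hG : IsOpen G)
    {u w : EuclideanSpace ℝ (Fin N) → ℝ} (h : EqOn u w G) (a : EuclideanSpace ℝ (Fin N)) :
    EqOn (dd a u) (dd a w) G := fun x hx => by
  have := (h.eventuallyEq_of_mem (hG.mem_nhds hx)).fderiv_eq (𝕜 := ℝ)
  simp only [dd, this]

theorem lap_eq {N : ℕ} {G : Set (EuclideanSpace ℝ (Fin N))}
    {u : EuclideanSpace ℝ (Fin N) → ℝ} (hu : AnalyticOnNhd ℝ u G) :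
    EqOn (lap u) (fun x => ∑ i, dd (EuclideanSpace.single i 1) (dd (EuclideanSpace.single i 1) u) x)
      G := fun x hx => by
  simp only [lap]
  refine Finset.sum_congr rfl fun i _ => ?_
  rw [dd_dd hu _ _ hx, iteratedFDeriv_two_apply]
  rfl

theorem Sol.dd {N : ℕ} {G : Set (EuclideanSpace ℝ (Fin N))} (hG : IsOpen G) {k : ℝ}
    {u : EuclideanSpace ℝ (Fin N) → ℝ} (hu : Sol G k u) (w : EuclideanSpace ℝ (Fin N)) :
    Sol G k (dd w u) := by
  refine ⟨dd_analytic hu.1 w, fun x hx => ?_⟩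
  have h1 : lap (_root_.dd w u) x = _root_.dd w (fun x => ∑ i, _root_.dd (EuclideanSpace.single i 1)
      (_root_.dd (EuclideanSpace.single i 1) u) x) x := by
    rw [lap_eq (dd_analytic hu.1 w) hx]
    change _ = fderiv ℝ _ x w
    rw [fderiv_fun_sum (fun i _ => (dd_analytic (dd_analytic hu.1 _) _ x hx).differentiableAt)]
    rw [_root_.sum_apply]
    refine Finset.sum_congr rfl fun i _ => ?_
    rw [dd_congr hG (dd_comm hu.1 _ w) _ hx, dd_comm (dd_analytic hu.1 _) _ w hx]
    rfl
  have h2 : EqOn (fun x => ∑ i, _root_.dd (EuclideanSpace.single i 1)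
      (_root_.dd (EuclideanSpace.single i 1) u) x) (fun x => (-k ^ 2) * u x) G := fun y hy => by
    have := hu.2 y hy
    rw [lap_eq hu.1 hy] at this
    simp only at this ⊢
    linarith
  rw [h1, dd_congr hG h2 w hx]
  unfold _root_.dd
  rw [fderiv_const_mul (hu.1 x hx).differentiableAt]
  simp

/-- components of iterated derivatives -/
theorem iter_succ {N : ℕ} {G : Set (EuclideanSpace ℝ (Fin N))}
    {v : EuclideanSpace ℝ (Fin N) → ℝ} (hv : AnalyticOnNhd ℝ v G) (n : ℕ)
    (w : Fin (n + 1) → EuclideanSpace ℝ (Fin N)) :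
    EqOn (dd (w 0) (fun y => iteratedFDeriv ℝ n v y (Fin.tail w)))
      (fun y => iteratedFDeriv ℝ (n + 1) v y w) G := fun x hx => by
  have h := (hv.iteratedFDeriv n x hx).differentiableAt.hasFDerivAt
  have h2 := ((ContinuousMultilinearMap.apply ℝ (fun _ : Fin n => EuclideanSpace ℝ (Fin N)) ℝ
    (Fin.tail w)).hasFDerivAt.comp x h).fderiv
  simp only
  rw [iteratedFDeriv_succ_apply_left]
  change fderiv ℝ (⇑(ContinuousMultilinearMap.apply ℝ (fun _ : Fin n => EuclideanSpace ℝ (Fin N)) ℝ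
    (Fin.tail w)) ∘ iteratedFDeriv ℝ n v) x (w 0) = _
  rw [h2]; rfl

theorem iter_sol {N : ℕ} {G : Set (EuclideanSpace ℝ (Fin N))} (hG : IsOpen G) {k : ℝ}
    {v : EuclideanSpace ℝ (Fin N) → ℝ} (hv : Sol G k v) (n : ℕ)
    (w : Fin n → EuclideanSpace ℝ (Fin N)) :
    Sol G k (fun y => iteratedFDeriv ℝ n v y w) := by
  induction n with
  | zero => exact hv.congr hG (fun x _ => by simp)
  | succ n ih => exact ((ih (Fin.tail w)).dd hG (w 0)).congr hG (iter_succ hv.1 n w)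

def stratum {N : ℕ} (G : Set (EuclideanSpace ℝ (Fin N))) (v : EuclideanSpace ℝ (Fin N) → ℝ)
    (n : ℕ) : Set (EuclideanSpace ℝ (Fin N)) :=
  {x ∈ G | iteratedFDeriv ℝ n v x = 0 ∧ iteratedFDeriv ℝ (n + 1) v x = 0 ∧
    iteratedFDeriv ℝ (n + 2) v x ≠ 0}

theorem stratum_local {N : ℕ} {G : Set (EuclideanSpace ℝ (Fin N))} (hG : IsOpen G) {k : ℝ}
    {v : EuclideanSpace ℝ (Fin N) → ℝ} (hv : Sol G k v) (n : ℕ)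
    (p : EuclideanSpace ℝ (Fin N)) (hp : p ∈ stratum G v n) :
    2 ≤ N ∧ ∃ t ∈ 𝓝[stratum G v n] p, dimH t ≤ ((N - 2 : ℕ) : ENNReal) := by
  obtain ⟨hpG, h0, h1, h2⟩ := hp
  obtain ⟨w, hw⟩ : ∃ w, iteratedFDeriv ℝ (n + 2) v p w ≠ 0 := by
    by_contra hne
    push Not at hne
    exact h2 (by ext w; simpa using hne w)
  set u : EuclideanSpace ℝ (Fin N) → ℝ := fun y => iteratedFDeriv ℝ n v y (Fin.tail (Fin.tail w))
    with hu
  have hus : Sol G k u := iter_sol hG hv n _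
  have hgrad : ∀ x ∈ stratum G v n, fderiv ℝ u x = 0 := by
    rintro x ⟨hxG, -, hx1, -⟩
    ext a
    have := iter_succ hv.1 n (Fin.cons a (Fin.tail (Fin.tail w))) hxG
    simpa [dd, hx1] using this
  have hstrict := (hus.1.fderiv p hpG).hasStrictFDerivAt
  have hne : fderiv ℝ (fderiv ℝ u) p ≠ 0 := by
    intro h
    apply hw
    refine (iter_succ hv.1 (n + 1) w hpG).symm.trans ?_
    rw [← dd_congr hG (iter_succ hv.1 n (Fin.tail w)) (w 0) hpG, dd_dd hus.1 _ _ hpG, h]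
    rfl
  have hb := ker_bound _ (fun a b => snd_symm hus.1 a b hpG) hne (by
    have h3 := hus.2 p hpG
    rw [lap_eq hus.1 hpG] at h3
    have h4 : u p = 0 := by simp [hu, h0]
    rw [h4, mul_zero, add_zero] at h3
    rw [← h3]
    exact Finset.sum_congr rfl fun i _ => (dd_dd hus.1 _ _ hpG).symm)
  obtain ⟨t, ht, hd⟩ := dimH_local _ _ p hstrict _ hgrad
  refine ⟨by omega, t, ht, hd.trans ?_⟩
  exact_mod_cast (by omega : _ ≤ N - 2)

theorem stratum_cover {N : ℕ} {G : Set (EuclideanSpace ℝ (Fin N))} (hGc : IsPreconnected G)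
    {v : EuclideanSpace ℝ (Fin N) → ℝ} (hv : AnalyticOnNhd ℝ v G)
    (hvnt : ¬ ∀ x ∈ G, v x = 0) {x : EuclideanSpace ℝ (Fin N)} (hx : x ∈ G) (h0 : v x = 0)
    (h1 : fderiv ℝ v x = 0) : ∃ n, x ∈ stratum G v n := by
  have hex : ∃ n, iteratedFDeriv ℝ n v x ≠ 0 := by
    by_contra hne
    push Not at hne
    apply hvnt
    obtain ⟨q, r, hq⟩ := hv x hx
    refine hv.eqOn_zero_of_preconnected_of_eventuallyEq_zero hGc hx ?_
    filter_upwards [Metric.eball_mem_nhds x hq.r_pos] with y hy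
    have hs := hq.hasSum_sub hy
    have hz : (fun n => q n fun _ => y - x) = fun _ => 0 := by
      funext n
      have := hq.factorial_smul (y - x) n
      rw [hne n] at this
      simpa [Nat.factorial_ne_zero] using this
    rw [hz] at hs
    exact hs.unique hasSum_zero
  classical
  have hspec := Nat.find_spec hex
  have hmin := fun m => Nat.find_min hex (m := m)
  generalize Nat.find hex = j at hspec hmin
  match j, hspec, hmin with
  | 0, hspec, _ => exact absurd (by ext w; simpa using h0) hspec
  | 1, hspec, _ => exact absurd (by ext w; rw [iteratedFDeriv_one_apply, h1]; rfl) hspec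
  | n + 2, hspec, hmin =>
    exact ⟨n, hx, not_not.1 (hmin n (by omega)), not_not.1 (hmin (n + 1) (by omega)), hspec⟩

theorem dimH_sing {N : ℕ} {G : Set (EuclideanSpace ℝ (Fin N))} (hG : IsOpen G) {k : ℝ}
    {v : EuclideanSpace ℝ (Fin N) → ℝ} (hv : Sol G k v) :
    dimH (⋃ n, stratum G v n) ≤ ((N - 2 : ℕ) : ENNReal) := by
  rw [dimH_iUnion]
  refine iSup_le fun n => ?_
  by_contra h
  push Not at h
  obtain ⟨x, hx, hxt⟩ := exists_mem_nhdsWithin_lt_dimH_of_lt_dimH h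
  obtain ⟨-, t, ht, hd⟩ := stratum_local hG hv n x hx
  exact absurd (hxt t ht) (not_lt.2 hd)

/-- A set of small dimension does not separate a convex set. -/
theorem no_sep {N : ℕ} (S B U V : Set (EuclideanSpace ℝ (Fin N))) (hB : Convex ℝ B)
    (hBo : IsOpen B) (hU : IsOpen U) (hV : IsOpen V) (hUV : Disjoint U V)
    (hcov : B ⊆ U ∪ V ∪ S) (hS : S.Nonempty → 2 ≤ N) (hd : dimH S ≤ ((N - 2 : ℕ) : ENNReal))
    {a b : EuclideanSpace ℝ (Fin N)} (ha : a ∈ B ∩ U) (hb : b ∈ B ∩ V) : False := by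
  set e := b - a with he
  have he0 : e ≠ 0 := by
    intro h
    have : b = a := sub_eq_zero.1 h
    exact disjoint_left.1 hUV ha.2 (this ▸ hb.2)
  set K : Submodule ℝ (EuclideanSpace ℝ (Fin N)) := (Submodule.span ℝ {e})ᗮ with hK
  let P := K.orthogonalProjectionOnto
  have hfr : 1 + Module.finrank ℝ K = N := by
    have := Submodule.finrank_add_finrank_orthogonal (Submodule.span ℝ {e})
    rwa [finrank_span_singleton he0, finrank_euclideanSpace_fin] at this
  have hdense : Dense (P '' S)ᶜ := by
    rcases S.eq_empty_or_nonempty with h | h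
    · simp [h]
    · apply dense_compl_of_dimH_lt_finrank
      have h2 := hS h
      refine ((P.lipschitz.dimH_image_le S).trans hd).trans_lt ?_
      exact_mod_cast (by omega : N - 2 < Module.finrank ℝ K)
  have hsurj : Function.Surjective P := fun z =>
    ⟨z, Submodule.orthogonalProjectionOnto_mem_subspace_eq_self z⟩
  have hopen : IsOpenMap P := P.isOpenMap hsurj
  let W : Set (EuclideanSpace ℝ (Fin N)) := (B ∩ U) ∩ (fun y => y + e) ⁻¹' (B ∩ V)
  have hW : IsOpen W := (hBo.inter hU).inter ((hBo.inter hV).preimage (by fun_prop))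
  have haW : a ∈ W := ⟨ha, by simpa [he] using hb⟩
  obtain ⟨z, ⟨a', ha', rfl⟩, hz⟩ := hdense.inter_open_nonempty _ (hopen W hW) ⟨_, a, haW, rfl⟩ |>.imp
    fun z hz => (⟨hz.1, hz.2⟩ : z ∈ P '' W ∧ z ∈ (P '' S)ᶜ)
  have hPe : P e = 0 := by
    apply Submodule.orthogonalProjectionOnto_eq_zero_iff.2
    rw [hK]
    exact Submodule.le_orthogonal_orthogonal _ (Submodule.mem_span_singleton_self e)
  have hseg : segment ℝ a' (a' + e) ⊆ U ∪ V := by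
    intro y hy
    have hyB := hB.segment_subset ha'.1.1 ha'.2.1 hy
    rcases hcov hyB with h | h
    · exact h
    · exfalso
      apply hz
      refine ⟨y, h, ?_⟩
      rw [segment_eq_image'] at hy
      obtain ⟨t, -, rfl⟩ := hy
      simp [hPe]
  rcases IsPreconnected.subset_or_subset hU hV hUV hseg (convex_segment _ _).isPreconnected with h | h
  · exact disjoint_left.1 hUV (h (right_mem_segment _ _ _)) ha'.2.2
  · exact disjoint_left.1 hUV ha'.1.2 (h (left_mem_segment _ _ _))

/-- near any point of `∂A ∩ G` (where `A` is the interior of the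
closure of finitely many nodal domains) there is a point of `∂A` where the
gradient of `v` does not vanish. -/
theorem stmt1 {N : ℕ} (G : Set (EuclideanSpace ℝ (Fin N)))
    (hGopen : IsOpen G) (hGconn : IsConnected G)
    (k : ℝ) (hk : 0 < k) (v : EuclideanSpace ℝ (Fin N) → ℝ)
    (hva : AnalyticOnNhd ℝ v G)
    (hHelm : ∀ x ∈ G, lap v x + k ^ 2 * v x = 0)
    (hvnt : ¬ ∀ x ∈ G, v x = 0)
    (n : ℕ) (A : Fin n → Set (EuclideanSpace ℝ (Fin N)))
    (hA : ∀ i, ∃ p, p ∈ G ∧ v p ≠ 0 ∧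
      A i = connectedComponentIn {x ∈ G | v x ≠ 0} p)
    (Aint : Set (EuclideanSpace ℝ (Fin N)))
    (hAint : Aint = interior (closure (⋃ i, A i))) :
    ∀ x ∈ frontier Aint ∩ G, ∀ r > 0, ball x r ⊆ G →
      ∃ y, y ∈ ball x r ∩ frontier Aint ∧ gradient v y ≠ 0 := by
  rintro x ⟨hxf, hxG⟩ r hr hball
  by_contra hcon
  push Not at hcon
  have hsol : Sol G k v := ⟨hva, hHelm⟩
  have hAo : IsOpen Aint := hAint ▸ isOpen_interior
  have hAcl : closure Aint ⊆ closure (⋃ i, A i) := by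
    rw [hAint]; exact closure_minimal interior_subset isClosed_closure
  have hnod : IsOpen {x ∈ G | v x ≠ 0} :=
    hva.continuousOn.isOpen_inter_preimage hGopen isOpen_compl_singleton
  -- `v` vanishes on the frontier
  have hv0 : ∀ y ∈ frontier Aint, y ∈ G → v y = 0 := by
    intro y hyf hyG
    by_contra hvy
    have hyn : y ∈ {x ∈ G | v x ≠ 0} := ⟨hyG, hvy⟩
    have hC : IsOpen (connectedComponentIn {x ∈ G | v x ≠ 0} y) := hnod.connectedComponentIn
    obtain ⟨z, hzC, hz⟩ := mem_closure_iff.1 (hAcl (frontier_subset_closure hyf)) _ hC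
      (mem_connectedComponentIn hyn)
    obtain ⟨i, hzi⟩ := mem_iUnion.1 hz
    obtain ⟨p, -, -, hAi⟩ := hA i
    have h1 : A i = connectedComponentIn {x ∈ G | v x ≠ 0} y := by
      rw [hAi] at hzi ⊢
      rw [connectedComponentIn_eq hzi, connectedComponentIn_eq hzC]
    have h2 : A i ⊆ Aint := by
      rw [hAint]
      exact interior_maximal ((subset_iUnion A i).trans subset_closure) (h1 ▸ hC)
    have h3 : y ∈ Aint := h2 (h1 ▸ mem_connectedComponentIn hyn)
    rw [hAo.frontier_eq] at hyf
    exact hyf.2 h3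
  have hxB : x ∈ ball x r := mem_ball_self hr
  obtain ⟨a, haB, haA⟩ := mem_closure_iff.1 (frontier_subset_closure hxf) _ isOpen_ball hxB
  obtain ⟨b, hbB, hbA⟩ : ∃ b ∈ ball x r, b ∉ closure (⋃ i, A i) := by
    by_contra hne
    push Not at hne
    have : x ∈ Aint := by
      rw [hAint]
      exact interior_maximal hne isOpen_ball hxB
    rw [hAo.frontier_eq] at hxf
    exact hxf.2 this
  refine no_sep (⋃ n, stratum G v n) (ball x r) Aint (closure Aint)ᶜ (convex_ball x r) isOpen_ball hAo
    isClosed_closure.isOpen_compl ?_ ?_ ?_ (dimH_sing hGopen hsol) ⟨haB, haA⟩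
    ⟨hbB, fun h => hbA (hAcl h)⟩
  · exact disjoint_left.2 fun y hy h => h (subset_closure hy)
  · intro y hyB
    by_cases h1 : y ∈ closure Aint
    · by_cases h2 : y ∈ Aint
      · exact Or.inl (Or.inl h2)
      · right
        have hyf : y ∈ frontier Aint := by rw [hAo.frontier_eq]; exact ⟨h1, h2⟩
        have hg := hcon y ⟨hyB, hyf⟩
        have hf : fderiv ℝ v y = 0 := by
          unfold gradient at hg
          simpa using hg
        exact mem_iUnion.2 (stratum_cover hGconn.isPreconnected hva hvnt (hball hyB)
          (hv0 y hyf (hball hyB)) hf)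
    · exact Or.inl (Or.inr h1)
  · rintro ⟨y, hy⟩
    obtain ⟨m, hm⟩ := mem_iUnion.1 hy
    exact (stratum_local hGopen hsol m y hm).1
end

section
/- Let G ⊆ ℝ^N be open and connected and v a nontrivial real-analytic solution of Δv + k²v = 0 on G. Suppose the nodal domains of v form a countable family. Then the nodal domains can be enumerated A₁, A₂, … such that for every j ≥ 2 there exists i < j and an analytic regular portion Σ_j of the nodal set {v = 0} (an open connected hypersurface consisting of zeros of v where ∇v ≠ 0) with Σ_j ⊆ ∂A_i ∩ ∂A_j. -/
open Metric Set

/-- A regular portion of the nodal set of `v` in `G`: a nonempty connected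
relatively open subset of the nodal set consisting of regular (noncritical)
nodal points. -/
def IsRegularPortion {N : ℕ} (G : Set (EuclideanSpace ℝ (Fin N)))
    (v : EuclideanSpace ℝ (Fin N) → ℝ) (S : Set (EuclideanSpace ℝ (Fin N))) : Prop :=
  S.Nonempty ∧ IsConnected S ∧
    (∃ U, IsOpen U ∧ S = U ∩ {x ∈ G | v x = 0}) ∧
    ∀ z ∈ S, gradient v z ≠ 0


theorem enum_aux {α : Type*} (D : Set α) (hc : D.Countable) (hne : D.Nonempty)
    (R : α → α → Prop)
    (hR : ∀ V ⊆ D, V.Nonempty → V ≠ D → ∃ a ∈ V, ∃ b ∈ D \ V, R a b) :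
    ∃ (n : ℕ∞) (A : ℕ → α),
      (∀ j : ℕ, (j : ℕ∞) < n → A j ∈ D) ∧
      (∀ s ∈ D, ∃ j : ℕ, (j : ℕ∞) < n ∧ A j = s) ∧
      (∀ i j : ℕ, (i : ℕ∞) < n → (j : ℕ∞) < n → A i = A j → i = j) ∧
      (∀ j : ℕ, 1 ≤ j → (j : ℕ∞) < n → ∃ i < j, R (A i) (A j)) := by
  classical
  obtain ⟨e, he⟩ := Set.countable_iff_exists_injOn.1 hc
  have hpick : ∀ V : Set α, ∃ b, V ⊆ D → V ≠ D → (b ∈ D \ V ∧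
      (V.Nonempty → (∃ a ∈ V, R a b) ∧
        ∀ b' ∈ D \ V, (∃ a ∈ V, R a b') → e b ≤ e b')) := by
    intro V
    by_cases hV : V ⊆ D ∧ V ≠ D
    · rcases V.eq_empty_or_nonempty with h0 | h0
      · obtain ⟨b, hb⟩ := hne
        exact ⟨b, fun _ _ => ⟨by simp [h0, hb], fun h => by simp [h0] at h⟩⟩
      · obtain ⟨a, ha, b, hb, hab⟩ := hR V hV.1 h0 hV.2
        have hex : ∃ n, ∃ b ∈ D \ V, (∃ a ∈ V, R a b) ∧ e b = n := ⟨_, b, hb, ⟨a, ha, hab⟩, rfl⟩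
        obtain ⟨c, hc, hac, hec⟩ := Nat.find_spec hex
        refine ⟨c, fun _ _ => ⟨hc, fun _ => ⟨hac, fun b' hb' hab' => ?_⟩⟩⟩
        rw [hec]
        exact Nat.find_min' hex ⟨b', hb', hab', rfl⟩
    · obtain ⟨b, -⟩ := hne
      exact ⟨b, fun h1 h2 => absurd ⟨h1, h2⟩ hV⟩
  choose pick hp using hpick
  let V : ℕ → Set α := fun n => Nat.rec ∅ (fun _ W => insert (pick W) W) n
  have V0 : V 0 = ∅ := rfl
  have VS : ∀ j, V (j+1) = insert (pick (V j)) (V j) := fun j => rfl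
  have hVn : ∀ j : ℕ, (j : ℕ∞) ≤ D.encard → V j ⊆ D ∧ (V j).encard = j := by
    intro j
    induction j with
    | zero => intro _; simp [V0]
    | succ j ih =>
      intro hj
      have hlt : (j : ℕ∞) < D.encard := lt_of_lt_of_le (by exact_mod_cast Nat.lt_succ_self j) hj
      obtain ⟨h1, h2⟩ := ih hlt.le
      have hne' : V j ≠ D := by
        intro h; rw [← h, h2] at hlt; exact lt_irrefl _ hlt
      have h3 := (hp (V j) h1 hne').1
      rw [VS]
      refine ⟨insert_subset h3.1 h1, ?_⟩
      rw [Set.encard_insert_of_notMem h3.2, h2]; simp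
  have hstep : ∀ j : ℕ, (j : ℕ∞) < D.encard → V j ⊆ D ∧ V j ≠ D := by
    intro j hj
    obtain ⟨h1, h2⟩ := hVn j hj.le
    refine ⟨h1, ?_⟩
    intro h; rw [← h, h2] at hj; exact lt_irrefl _ hj
  have hmem : ∀ j, ∀ x, x ∈ V j ↔ ∃ i < j, pick (V i) = x := by
    intro j
    induction j with
    | zero => simp [V0]
    | succ j ih =>
      intro x
      rw [VS, mem_insert_iff, ih]
      constructor
      · rintro (h | ⟨i, hi, h⟩)
        · exact ⟨j, Nat.lt_succ_self j, h.symm⟩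
        · exact ⟨i, Nat.lt_succ_of_lt hi, h⟩
      · rintro ⟨i, hi, h⟩
        rcases Nat.lt_succ_iff_lt_or_eq.1 hi with h' | h'
        · exact Or.inr ⟨i, h', h⟩
        · subst h'; exact Or.inl h.symm
  have hinj : ∀ i j : ℕ, i < j → (j : ℕ∞) < D.encard → pick (V i) ≠ pick (V j) := by
    intro i j hij hj h
    obtain ⟨h1, h2⟩ := hstep j hj
    exact (hp _ h1 h2).1.2 (h ▸ (hmem j _).2 ⟨i, hij, rfl⟩)
  refine ⟨D.encard, fun j => pick (V j), ?_, ?_, ?_, ?_⟩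
  · intro j hj
    obtain ⟨h1, h2⟩ := hstep j hj
    exact (hp _ h1 h2).1.1
  · by_contra hcon
    push Not at hcon
    obtain ⟨s, hs, hsn⟩ := hcon
    by_cases hfin : D.Finite
    · have hn := hfin.cast_ncard_eq
      obtain ⟨h1, h2⟩ := hVn D.ncard hn.le
      have : V D.ncard = D := hfin.eq_of_subset_of_encard_le' h1 (by rw [h2, hn])
      rw [← this, hmem] at hs
      obtain ⟨i, hi, h⟩ := hs
      exact hsn i (by rw [← hn]; exact_mod_cast hi) h
    · have htop : D.encard = ⊤ := Set.encard_eq_top_iff.2 hfin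
      have hlt : ∀ j : ℕ, (j : ℕ∞) < D.encard := by intro j; rw [htop]; exact ENat.natCast_lt_top j
      obtain ⟨a, ⟨i, rfl⟩, b, ⟨hb, hbV⟩, hab⟩ := hR (range fun j => pick (V j))
        (by rintro _ ⟨j, rfl⟩; obtain ⟨h1, h2⟩ := hstep j (hlt j); exact (hp _ h1 h2).1.1)
        ⟨_, 0, rfl⟩ (by intro h; rw [← h] at hs; obtain ⟨j, hj⟩ := hs; exact hsn j (hlt j) hj)
      have hle : ∀ j, i < j → e (pick (V j)) ≤ e b := by
        intro j hj
        obtain ⟨h1, h2⟩ := hstep j (hlt j)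
        have hi : pick (V i) ∈ V j := (hmem j _).2 ⟨i, hj, rfl⟩
        refine ((hp _ h1 h2).2 ⟨_, hi⟩).2 b ⟨hb, ?_⟩ ⟨_, hi, hab⟩
        intro hbj
        obtain ⟨l, -, hl⟩ := (hmem j _).1 hbj
        exact hbV ⟨l, hl⟩
      have hf : (Ioi i).Finite := by
        refine Set.Finite.of_injOn (f := fun j => e (pick (V j))) (t := Iic (e b)) ?_ ?_
          (finite_Iic _)
        · intro j hj; exact hle j hj
        · intro j _ l _ h
          have h' : pick (V j) = pick (V l) := by
            obtain ⟨h1, h2⟩ := hstep j (hlt j)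
            obtain ⟨h3, h4⟩ := hstep l (hlt l)
            exact he (hp _ h1 h2).1.1 (hp _ h3 h4).1.1 h
          rcases lt_trichotomy j l with h1 | h1 | h1
          · exact absurd h' (hinj _ _ h1 (hlt _))
          · exact h1
          · exact absurd h'.symm (hinj _ _ h1 (hlt _))
      exact Set.Ioi_infinite i hf
  · intro i j hi hj h
    rcases lt_trichotomy i j with h1 | h1 | h1
    · exact absurd h (hinj _ _ h1 hj)
    · exact h1
    · exact absurd h.symm (hinj _ _ h1 hi)
  · intro j hj hjn
    obtain ⟨h1, h2⟩ := hstep j hjn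
    obtain ⟨⟨a, ha, hab⟩, -⟩ := (hp _ h1 h2).2 ⟨_, (hmem j _).2 ⟨0, hj, rfl⟩⟩
    obtain ⟨i, hi, rfl⟩ := (hmem j _).1 ha
    exact ⟨i, hi, hab⟩

open Topology in
theorem local_aux {E : Type*} [NormedAddCommGroup E] [NormedSpace ℝ E] [CompleteSpace E]
    (g : E → ℝ) (p : E) (g' : E →L[ℝ] ℝ) (hg : HasStrictFDerivAt g g' p) (hg' : g' ≠ 0)
    (V : Set E) (hV : V ∈ 𝓝 p) :
    ∃ B ⊆ V, IsOpen B ∧ p ∈ B ∧ IsPreconnected (B ∩ {x | 0 < g x}) ∧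
      IsPreconnected (B ∩ {x | g x < 0}) ∧ IsPreconnected (B ∩ {x | g x = 0}) := by
  have hr : (g' : E →ₗ[ℝ] ℝ).range = ⊤ := by
    refine LinearMap.range_eq_top.2 (LinearMap.surjective ?_)
    intro h; apply hg'; ext x; exact congrArg (fun f : E →ₗ[ℝ] ℝ => f x) h
  let φ := HasStrictFDerivAt.implicitToOpenPartialHomeomorph g g' hg hr
  have hfst : ∀ x, (φ x).1 = g x := HasStrictFDerivAt.implicitToOpenPartialHomeomorph_fst hg hr
  have hps : p ∈ φ.source := HasStrictFDerivAt.mem_implicitToOpenPartialHomeomorph_source hg hr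
  have hnhds : φ.target ∩ φ.symm ⁻¹' V ∈ 𝓝 (φ p) := by
    refine Filter.inter_mem (φ.open_target.mem_nhds (φ.map_source hps)) ?_
    refine (φ.continuousAt_symm (φ.map_source hps)).preimage_mem_nhds ?_
    rw [φ.left_inv hps]; exact hV
  obtain ⟨ε, hε, hball⟩ := Metric.mem_nhds_iff.1 hnhds
  have hbt : ball (φ p) ε ⊆ φ.target := fun x hx => (hball hx).1
  have hconv : ∀ T : Set ℝ, Convex ℝ T →
      IsPreconnected (φ.symm '' (ball (φ p) ε) ∩ {x | g x ∈ T}) := by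
    intro T hT
    have h1 : φ.symm '' (ball (φ p) ε) ∩ {x | g x ∈ T} =
        φ.symm '' (ball (φ p) ε ∩ Prod.fst ⁻¹' T) := by
      ext x; constructor
      · rintro ⟨⟨y, hy, rfl⟩, hx⟩
        refine ⟨y, ⟨hy, ?_⟩, rfl⟩
        have := hfst (φ.symm y)
        rw [φ.right_inv (hbt hy)] at this
        simpa [this] using hx
      · rintro ⟨y, ⟨hy, hyT⟩, rfl⟩
        refine ⟨⟨y, hy, rfl⟩, ?_⟩
        have := hfst (φ.symm y)
        rw [φ.right_inv (hbt hy)] at this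
        simpa [← this] using hyT
    rw [h1]
    refine IsPreconnected.image ?_ _ (φ.continuousOn_symm.mono (inter_subset_left.trans hbt))
    refine Convex.isPreconnected ?_
    exact (convex_ball _ _).inter (hT.linear_preimage (LinearMap.fst ℝ ℝ _))
  refine ⟨φ.symm '' (ball (φ p) ε), ?_, ?_, ?_, hconv (Ioi 0) (convex_Ioi 0),
    hconv (Iio 0) (convex_Iio 0), hconv {0} (convex_singleton 0)⟩
  · rintro _ ⟨y, hy, rfl⟩; exact (hball hy).2
  · exact φ.symm.isOpen_image_of_subset_source isOpen_ball hbt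
  · exact ⟨φ p, mem_ball_self hε, φ.left_inv hps⟩

section
variable {E : Type*} [NormedAddCommGroup E] [NormedSpace ℝ E]

/-- iterated directional derivatives -/
noncomputable def dlist (v : E → ℝ) : List E → E → ℝ
  | [] => v
  | w :: ws => fun x => fderiv ℝ (dlist v ws) x w

theorem an_dir {G : Set E} {u : E → ℝ} (hu : AnalyticOnNhd ℝ u G) (w : E) :
    AnalyticOnNhd ℝ (fun x => fderiv ℝ u x w) G := by
  intro x hx
  exact ((ContinuousLinearMap.apply ℝ ℝ w).analyticAt _).comp (hu.fderiv x hx)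

theorem an_dlist {G : Set E} {u : E → ℝ} (hu : AnalyticOnNhd ℝ u G) (l : List E) :
    AnalyticOnNhd ℝ (dlist u l) G := by
  induction l with
  | nil => exact hu
  | cons w ws ih => exact an_dir ih w

theorem snd_dir {G : Set E} {u : E → ℝ} (hu : AnalyticOnNhd ℝ u G) {x : E} (hx : x ∈ G) (a b : E) :
    fderiv ℝ (fun y => fderiv ℝ u y b) x a = fderiv ℝ (fderiv ℝ u) x a b := by
  rw [fderiv_clm_apply (hu.fderiv x hx).differentiableAt (by fun_prop)]
  simp

theorem symm_dir {G : Set E} {u : E → ℝ} (hu : AnalyticOnNhd ℝ u G) {x : E} (hx : x ∈ G) (a b : E) :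
    fderiv ℝ (fderiv ℝ u) x a b = fderiv ℝ (fderiv ℝ u) x b a := by
  have h := (hu x hx).contDiffAt (n := 2)
  exact h.isSymmSndFDerivAt (by simp) a b

theorem iter_dlist {G : Set E} (hG : IsOpen G) {u : E → ℝ} (hu : AnalyticOnNhd ℝ u G) (n : ℕ)
    (m : Fin n → E) : ∀ x ∈ G, iteratedFDeriv ℝ n u x m = dlist u (List.ofFn m) x := by
  induction n with
  | zero => intro x hx; simp [dlist]
  | succ n ih =>
    intro x hx
    rw [iteratedFDeriv_succ_apply_left, List.ofFn_succ]
    have hd : DifferentiableAt ℝ (iteratedFDeriv ℝ n u) x := (hu.iteratedFDeriv n x hx).differentiableAt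
    rw [← fderiv_continuousMultilinear_apply_const_apply hd]
    have : (fun y => iteratedFDeriv ℝ n u y (Fin.tail m)) =ᶠ[nhds x]
        dlist u (List.ofFn (Fin.tail m)) := by
      filter_upwards [hG.mem_nhds hx] with y hy using ih _ y hy
    rw [this.fderiv_eq]
    rfl

theorem exists_dlist {G : Set E} (hG : IsOpen G) (hc : IsPreconnected G) {u : E → ℝ}
    (hu : AnalyticOnNhd ℝ u G)
    (hnt : ¬ ∀ x ∈ G, u x = 0) {x : E} (hx : x ∈ G) : ∃ l, dlist u l x ≠ 0 := by
  by_contra hcon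
  push Not at hcon
  apply hnt
  refine hu.eqOn_zero_of_preconnected_of_eventuallyEq_zero hc hx ?_
  obtain ⟨p, r, hp⟩ := hu x hx
  have h0 : ∀ y ∈ Metric.eball (0:E) r, u (x + y) = 0 := by
    intro y hy
    have h := hp.hasSum_iteratedFDeriv hy
    simp only [iter_dlist hG hu _ _ x hx, hcon, smul_zero] at h
    exact h.unique hasSum_zero
  filter_upwards [Metric.eball_mem_nhds x hp.r_pos] with y hy
  have := h0 (y - x) (by simpa [edist_eq_enorm_sub] using hy)
  simpa using this
end

theorem lap_eq_s4 {N : ℕ} (u : EuclideanSpace ℝ (Fin N) → ℝ) (x : EuclideanSpace ℝ (Fin N)) :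
    lap u x = ∑ i, fderiv ℝ (fderiv ℝ u) x (EuclideanSpace.single i 1) (EuclideanSpace.single i 1) := by
  simp [lap, iteratedFDeriv_two_apply]

theorem helm_dir {N : ℕ} {G : Set (EuclideanSpace ℝ (Fin N))} (hG : IsOpen G) (k : ℝ)
    {u : EuclideanSpace ℝ (Fin N) → ℝ} (hu : AnalyticOnNhd ℝ u G)
    (hH : ∀ x ∈ G, lap u x + k ^ 2 * u x = 0) (w : EuclideanSpace ℝ (Fin N)) :
    ∀ x ∈ G, lap (fun x => fderiv ℝ u x w) x + k ^ 2 * fderiv ℝ u x w = 0 := by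
  intro x hx
  have hev : (fun y => lap u y + k ^ 2 * u y) =ᶠ[nhds x] fun _ => 0 := by
    filter_upwards [hG.mem_nhds hx] with y hy using hH y hy
  have hlap : ∀ y ∈ G, lap u y = ∑ i, fderiv ℝ (fun z => fderiv ℝ u z (EuclideanSpace.single i 1)) y
      (EuclideanSpace.single i 1) := by
    intro y hy
    rw [lap_eq_s4]
    exact Finset.sum_congr rfl fun i _ => (snd_dir hu hy _ _).symm
  have hev2 : (fun y => (∑ i, fderiv ℝ (fun z => fderiv ℝ u z (EuclideanSpace.single i 1)) y
      (EuclideanSpace.single i 1)) + k ^ 2 * u y) =ᶠ[nhds x] fun _ => 0 := by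
    filter_upwards [hG.mem_nhds hx] with y hy
    rw [← hlap y hy]; exact hH y hy
  have h := congrArg (fun L : EuclideanSpace ℝ (Fin N) →L[ℝ] ℝ => L w) (hev2.fderiv_eq (𝕜 := ℝ))
  have hd : ∀ i : Fin N, DifferentiableAt ℝ (fun y => fderiv ℝ (fun z => fderiv ℝ u z
      (EuclideanSpace.single i 1)) y (EuclideanSpace.single i 1)) x := fun i =>
    (an_dir (an_dir hu _) _ x hx).differentiableAt
  have hdu := (hu x hx).differentiableAt
  rw [fderiv_fun_add (DifferentiableAt.fun_sum fun i _ => hd i) (hdu.const_mul _),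
    fderiv_fun_sum (fun i _ => hd i), fderiv_const_mul hdu] at h
  simp only [add_apply, ContinuousLinearMap.sum_apply, smul_apply,
    smul_eq_mul, fderiv_fun_const, Pi.zero_apply, zero_apply] at h
  rw [← h, lap_eq_s4]
  congr 1
  refine Finset.sum_congr rfl fun i _ => ?_
  set e := EuclideanSpace.single i (1:ℝ)
  rw [snd_dir (an_dir hu e) hx, symm_dir (an_dir hu e) hx,
    ← snd_dir (an_dir hu e) hx, ← snd_dir (an_dir hu w) hx]
  have : (fun y => fderiv ℝ (fun x => fderiv ℝ u x w) y e) =ᶠ[nhds x]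
      (fun y => fderiv ℝ (fun x => fderiv ℝ u x e) y w) := by
    filter_upwards [hG.mem_nhds hx] with y hy
    rw [snd_dir hu hy, symm_dir hu hy, snd_dir hu hy]
  rw [this.fderiv_eq]

theorem helm_dlist {N : ℕ} {G : Set (EuclideanSpace ℝ (Fin N))} (hG : IsOpen G) (k : ℝ)
    {u : EuclideanSpace ℝ (Fin N) → ℝ} (hu : AnalyticOnNhd ℝ u G)
    (hH : ∀ x ∈ G, lap u x + k ^ 2 * u x = 0) (l : List (EuclideanSpace ℝ (Fin N))) :
    ∀ x ∈ G, lap (dlist u l) x + k ^ 2 * dlist u l x = 0 := by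
  induction l with
  | nil => exact hH
  | cons w ws ih => exact helm_dir hG k (an_dlist hu ws) ih w

/-- The trace argument. -/
theorem trace_aux {N : ℕ} {G : Set (EuclideanSpace ℝ (Fin N))}
    {u : EuclideanSpace ℝ (Fin N) → ℝ} (hu : AnalyticOnNhd ℝ u G)
    {p : EuclideanSpace ℝ (Fin N)} (hp : p ∈ G) (hl : lap u p = 0)
    {g : EuclideanSpace ℝ (Fin N) → ℝ} (hg : AnalyticOnNhd ℝ g G) (hg' : fderiv ℝ g p ≠ 0)
    (hgp : g p = 0)
    (B : Set (EuclideanSpace ℝ (Fin N))) (hB : B ∈ nhds p)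
    (hv : ∀ x ∈ B, g x = 0 → fderiv ℝ u x = 0) : fderiv ℝ (fderiv ℝ u) p = 0 := by
  set ℓ := fderiv ℝ g p with hℓ
  set Q := fderiv ℝ (fderiv ℝ u) p with hQ
  have hmul : ∀ w, ∃ c : ℝ, ∀ a, Q a w = c * ℓ a := by
    intro w
    have hext : IsLocalExtrOn (fun x => fderiv ℝ u x w) {x | g x = g p} p := by
      left
      have : ∀ᶠ x in nhdsWithin p {x | g x = g p}, fderiv ℝ u p w ≤ fderiv ℝ u x w := by
        filter_upwards [mem_nhdsWithin_of_mem_nhds hB, self_mem_nhdsWithin] with x hx hx2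
        rw [hv x hx (hx2.trans hgp), hv p (mem_of_mem_nhds hB) hgp]
      exact this
    obtain ⟨a, b, hab, h⟩ := hext.exists_multipliers_of_hasStrictFDerivAt_1d
      (hg p hp).hasStrictFDerivAt (an_dir hu w p hp).hasStrictFDerivAt
    have hb : b ≠ 0 := by
      rintro rfl
      have ha : a ≠ 0 := by rintro rfl; exact hab rfl
      simp only [zero_smul, add_zero] at h
      exact hg' ((smul_eq_zero.1 h).resolve_left ha)
    refine ⟨-a / b, fun y => ?_⟩
    have h2 := congrArg (fun L => L y) h
    simp only [add_apply, smul_apply, smul_eq_mul,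
      zero_apply, snd_dir hu hp] at h2
    rw [hQ]
    field_simp
    linarith
  choose c hc using hmul
  have hsym : ∀ a b, Q a b = Q b a := symm_dir hu hp
  obtain ⟨y, hy⟩ : ∃ y, ℓ y ≠ 0 := by
    by_contra h; push Not at h; exact hg' (by ext y; simpa using h y)
  -- c w is a multiple of ℓ w
  have hcw : ∀ w, c w = c y / ℓ y * ℓ w := by
    intro w
    have := hsym y w
    rw [hc, hc] at this
    field_simp; linarith
  have hQf : ∀ a b, Q a b = c y / ℓ y * (ℓ a * ℓ b) := by
    intro a b; rw [hc, hcw b]; ring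
  have hsum : c y / ℓ y * ∑ i, ℓ (EuclideanSpace.single i 1) ^ 2 = 0 := by
    rw [lap_eq_s4] at hl
    rw [Finset.mul_sum, ← hl]
    refine Finset.sum_congr rfl fun i _ => ?_
    rw [← hQ, hQf]; ring
  have hpos : ∑ i, ℓ (EuclideanSpace.single i 1) ^ 2 ≠ 0 := by
    intro h0
    rw [Finset.sum_eq_zero_iff_of_nonneg (fun i _ => sq_nonneg _)] at h0
    apply hg'
    have : (ℓ : EuclideanSpace ℝ (Fin N) →ₗ[ℝ] ℝ) = 0 := by
      refine (EuclideanSpace.basisFun (Fin N) ℝ).toBasis.ext fun i => ?_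
      simpa using h0 i (Finset.mem_univ i)
    ext z; exact congrArg (fun f : EuclideanSpace ℝ (Fin N) →ₗ[ℝ] ℝ => f z) this
  have hz := (mul_eq_zero.1 hsum).resolve_right hpos
  ext a b
  rw [hQf, hz]; simp

/-- Local separation: if `U`, `W` are open with closures covering `G` and `g` is a regular function
at `p` vanishing on the common boundary, then near `p` the common boundary is `g = 0`. -/
theorem sep_local {E : Type*} [NormedAddCommGroup E] [NormedSpace ℝ E] [CompleteSpace E]
    {G U W : Set E} (hG : IsOpen G) (hU : IsOpen U) (hW : IsOpen W)
    (hcov : G ⊆ closure U ∪ closure W)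
    {g : E → ℝ} (hg : AnalyticOnNhd ℝ g G)
    (hgF : ∀ x ∈ G ∩ (closure U ∩ closure W), g x = 0)
    {p : E} (hp : p ∈ G ∩ (closure U ∩ closure W)) (hg' : fderiv ℝ g p ≠ 0) :
    ∃ B ⊆ G, IsOpen B ∧ p ∈ B ∧ IsPreconnected (B ∩ {x | 0 < g x}) ∧
      IsPreconnected (B ∩ {x | g x < 0}) ∧ IsPreconnected (B ∩ {x | g x = 0}) ∧
      (∀ x ∈ B, fderiv ℝ g x ≠ 0) ∧
      (B ∩ {x | g x = 0} ⊆ closure (B ∩ {x | 0 < g x}) ∩ closure (B ∩ {x | g x < 0})) ∧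
      (B ∩ {x | g x = 0} ⊆ closure U ∩ closure W) ∧
      ((Disjoint (B ∩ {x | 0 < g x}) U ∧ Disjoint (B ∩ {x | g x < 0}) W) ∨
       (Disjoint (B ∩ {x | 0 < g x}) W ∧ Disjoint (B ∩ {x | g x < 0}) U)) := by
  have hV : G ∩ {x | fderiv ℝ g x ≠ 0} ∈ nhds p :=
    Filter.inter_mem (hG.mem_nhds hp.1)
      ((hg.fderiv p hp.1).continuousAt.eventually_ne hg')
  obtain ⟨B, hBV, hB, hpB, h1, h2, h3⟩ := local_aux g p _ (hg p hp.1).hasStrictFDerivAt hg' _ hV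
  have hBG : B ⊆ G := fun x hx => (hBV hx).1
  have hBd : ∀ x ∈ B, fderiv ℝ g x ≠ 0 := fun x hx => (hBV hx).2
  have hcl : B ∩ {x | g x = 0} ⊆ closure (B ∩ {x | 0 < g x}) ∩ closure (B ∩ {x | g x < 0}) := by
    rintro x ⟨hx, hx0⟩
    have hx0 : g x = 0 := hx0
    constructor
    · by_contra hcon
      refine hBd x hx (IsLocalMax.fderiv_eq_zero ?_)
      have : ∀ᶠ y in nhds x, g y ≤ g x := by
        filter_upwards [hB.mem_nhds hx, isClosed_closure.isOpen_compl.mem_nhds hcon] with y hy hy2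
        rw [hx0]; by_contra h; exact hy2 (subset_closure ⟨hy, not_le.1 h⟩)
      exact this
    · by_contra hcon
      refine hBd x hx (IsLocalMin.fderiv_eq_zero ?_)
      have : ∀ᶠ y in nhds x, g x ≤ g y := by
        filter_upwards [hB.mem_nhds hx, isClosed_closure.isOpen_compl.mem_nhds hcon] with y hy hy2
        rw [hx0]; by_contra h; exact hy2 (subset_closure ⟨hy, not_le.1 h⟩)
      exact this
  have hside : ∀ T ⊆ B, IsPreconnected T → (∀ x ∈ T, g x ≠ 0) →
      (T ⊆ (closure U)ᶜ ∨ T ⊆ (closure W)ᶜ) := by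
    intro T hTB hT hT0
    have hsub : T ⊆ (G ∩ (closure U)ᶜ) ∪ (G ∩ (closure W)ᶜ) := by
      intro x hx
      by_cases hxU : x ∈ closure U
      · refine Or.inr ⟨hBG (hTB hx), fun hxW => hT0 x hx (hgF x ⟨hBG (hTB hx), hxU, hxW⟩)⟩
      · exact Or.inl ⟨hBG (hTB hx), hxU⟩
    have hdis : Disjoint (G ∩ (closure U)ᶜ) (G ∩ (closure W)ᶜ) := by
      rw [Set.disjoint_left]
      rintro x ⟨hx, hxU⟩ ⟨-, hxW⟩
      exact (hcov hx).elim hxU hxW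
    rcases hT.subset_or_subset (hG.inter isClosed_closure.isOpen_compl)
      (hG.inter isClosed_closure.isOpen_compl) hdis hsub with h | h
    · exact Or.inl fun x hx => (h hx).2
    · exact Or.inr fun x hx => (h hx).2
  -- both sides cannot miss the same open set
  have hno : ∀ Y : Set E, IsOpen Y → p ∈ closure Y → B ∩ {x | 0 < g x} ⊆ (closure Y)ᶜ →
      B ∩ {x | g x < 0} ⊆ (closure Y)ᶜ → False := by
    intro Y hY hpY ha hb
    obtain ⟨x, hxB, hxY⟩ := mem_closure_iff.1 hpY B hB hpB
    rcases lt_trichotomy (g x) 0 with h | h | h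
    · exact hb ⟨hxB, h⟩ (subset_closure hxY)
    · obtain ⟨y, hyY, hy⟩ := mem_closure_iff.1 (hcl ⟨hxB, h⟩).1 Y hY hxY
      exact ha hy (subset_closure hyY)
    · exact ha ⟨hxB, h⟩ (subset_closure hxY)
  have hdj : ∀ T Y : Set E, T ⊆ (closure Y)ᶜ → Disjoint T Y := fun T Y h =>
    Set.disjoint_left.2 fun x hx hxY => h hx (subset_closure hxY)
  have hcv : ∀ T ⊆ B, ∀ Y Z : Set E, (G ⊆ closure Y ∪ closure Z) → T ⊆ (closure Y)ᶜ →
      closure T ⊆ closure Z := by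
    intro T hTB Y Z hYZ h
    exact closure_minimal (fun x hx => (hYZ (hBG (hTB hx))).resolve_left (h hx)) isClosed_closure
  have hcov' : G ⊆ closure W ∪ closure U := by rwa [union_comm]
  refine ⟨B, hBG, hB, hpB, h1, h2, h3, hBd, hcl, ?_⟩
  rcases hside _ inter_subset_left h1 (fun x hx => ne_of_gt hx.2) with ha | ha <;>
  rcases hside _ inter_subset_left h2 (fun x hx => ne_of_lt hx.2) with hb | hb
  · exact (hno U hU hp.2.1 ha hb).elim
  · exact ⟨fun x hx => ⟨hcv _ inter_subset_left _ _ hcov' hb (hcl hx).2,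
      hcv _ inter_subset_left _ _ hcov ha (hcl hx).1⟩, Or.inl ⟨hdj _ _ ha, hdj _ _ hb⟩⟩
  · exact ⟨fun x hx => ⟨hcv _ inter_subset_left _ _ hcov' ha (hcl hx).1,
      hcv _ inter_subset_left _ _ hcov hb (hcl hx).2⟩, Or.inr ⟨hdj _ _ ha, hdj _ _ hb⟩⟩
  · exact (hno W hW hp.2.2 ha hb).elim

/-- Some point of the common boundary is a regular zero of `v`. -/
theorem exists_regular {N : ℕ} {G U W : Set (EuclideanSpace ℝ (Fin N))}
    (hG : IsOpen G) (hGc : IsPreconnected G) (hU : IsOpen U) (hW : IsOpen W)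
    (hcov : G ⊆ closure U ∪ closure W) (k : ℝ)
    {v : EuclideanSpace ℝ (Fin N) → ℝ} (hv : AnalyticOnNhd ℝ v G)
    (hH : ∀ x ∈ G, lap v x + k ^ 2 * v x = 0) (hnt : ¬ ∀ x ∈ G, v x = 0)
    (hvF : ∀ x ∈ G ∩ (closure U ∩ closure W), v x = 0)
    (hne : (G ∩ (closure U ∩ closure W)).Nonempty) :
    ∃ p ∈ G ∩ (closure U ∩ closure W), fderiv ℝ v p ≠ 0 := by
  classical
  have hex : ∃ m, ∃ l : List (EuclideanSpace ℝ (Fin N)), l.length = m ∧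
      ∃ p ∈ G ∩ (closure U ∩ closure W), dlist v l p ≠ 0 := by
    obtain ⟨p, hp⟩ := hne
    obtain ⟨l, hl⟩ := exists_dlist hG hGc hv hnt hp.1
    exact ⟨_, l, rfl, p, hp, hl⟩
  obtain ⟨l, hlm, p, hp, hlp⟩ := Nat.find_spec hex
  have hmin : ∀ l' : List (EuclideanSpace ℝ (Fin N)), l'.length < l.length →
      ∀ q ∈ G ∩ (closure U ∩ closure W), dlist v l' q = 0 := by
    intro l' hl' q hq
    by_contra h
    exact Nat.find_min hex (hlm ▸ hl') ⟨l', rfl, q, hq, h⟩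
  match l, hlp, hmin with
  | [], hlp, _ => exact absurd (hvF p hp) hlp
  | [w], hlp, _ =>
    refine ⟨p, hp, fun h => hlp ?_⟩
    simp [dlist, h]
  | w :: w' :: ws, hlp, hmin =>
    exfalso
    set u := dlist v ws with hu
    have hua : AnalyticOnNhd ℝ u G := an_dlist hv ws
    have huF : ∀ q ∈ G ∩ (closure U ∩ closure W), u q = 0 := hmin ws (by simp)
    have hduF : ∀ q ∈ G ∩ (closure U ∩ closure W), fderiv ℝ u q = 0 := by
      intro q hq
      ext y
      exact hmin (y :: ws) (by simp) q hq
    have hga : AnalyticOnNhd ℝ (dlist v (w' :: ws)) G := an_dlist hv _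
    have hg' : fderiv ℝ (dlist v (w' :: ws)) p ≠ 0 := by
      intro h
      apply hlp
      change fderiv ℝ (dlist v (w' :: ws)) p w = 0
      rw [h]; rfl
    have hgF := hmin (w' :: ws) (by simp)
    obtain ⟨B, hBG, hB, hpB, -, -, -, -, -, hBF, -⟩ :=
      sep_local hG hU hW hcov hga hgF hp hg'
    have hlap : lap u p = 0 := by
      have := helm_dlist hG k hv hH ws p hp.1
      rw [← hu, huF p hp] at this
      simpa using this
    have hz := trace_aux hua hp.1 hlap hga hg' (hgF p hp) B (hB.mem_nhds hpB)
      (fun x hx hx0 => hduF x ⟨hBG hx, hBF ⟨hx, hx0⟩⟩)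
    apply hlp
    change fderiv ℝ (fun x => fderiv ℝ u x w') p w = 0
    rw [snd_dir hua hp.1, hz]; rfl

theorem regular_portion {N : ℕ} {G B : Set (EuclideanSpace ℝ (Fin N))}
    {v : EuclideanSpace ℝ (Fin N) → ℝ} (hBG : B ⊆ G) (hB : IsOpen B)
    {p : EuclideanSpace ℝ (Fin N)} (hpB : p ∈ B) (hvp : v p = 0)
    (h3 : IsPreconnected (B ∩ {x | v x = 0})) (hd : ∀ x ∈ B, fderiv ℝ v x ≠ 0) :
    IsRegularPortion G v (B ∩ {x | v x = 0}) := by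
  refine ⟨⟨p, hpB, hvp⟩, ⟨⟨p, hpB, hvp⟩, h3⟩, ⟨B, hB, ?_⟩, ?_⟩
  · ext x; constructor
    · rintro ⟨h, h'⟩; exact ⟨h, hBG h, h'⟩
    · rintro ⟨h, -, h'⟩; exact ⟨h, h'⟩
  · intro z hz h
    apply hd z hz.1
    simpa [gradient] using h

theorem adj_aux {N : ℕ} (G : Set (EuclideanSpace ℝ (Fin N)))
    (hGopen : IsOpen G) (hGconn : IsConnected G)
    (k : ℝ) (v : EuclideanSpace ℝ (Fin N) → ℝ)
    (hva : AnalyticOnNhd ℝ v G)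
    (hHelm : ∀ x ∈ G, lap v x + k ^ 2 * v x = 0)
    (hvnt : ¬ ∀ x ∈ G, v x = 0)
    (D : Set (Set (EuclideanSpace ℝ (Fin N))))
    (hD : D = {s | ∃ p, p ∈ G ∧ v p ≠ 0 ∧
      s = connectedComponentIn {x ∈ G | v x ≠ 0} p})
    (V : Set (Set (EuclideanSpace ℝ (Fin N)))) (hVD : V ⊆ D) (hVne : V.Nonempty) (hne : V ≠ D) :
    ∃ a ∈ V, ∃ b ∈ D \ V, ∃ S : Set (EuclideanSpace ℝ (Fin N)), IsRegularPortion G v S ∧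
          S ⊆ frontier a ∩ frontier b := by
  set O : Set (EuclideanSpace ℝ (Fin N)) := {x ∈ G | v x ≠ 0} with hO
  have hOopen : IsOpen O := hva.continuousOn.isOpen_inter_preimage hGopen isOpen_compl_singleton
  have hcomp : ∀ x ∈ O, connectedComponentIn O x ∈ D := by
    intro x hx; rw [hD]; exact ⟨x, hx.1, hx.2, rfl⟩
  have heq : ∀ s ∈ D, ∀ x ∈ s, x ∈ O ∧ s = connectedComponentIn O x := by
    intro s hs x hx
    rw [hD] at hs
    obtain ⟨p, hp, hvp, rfl⟩ := hs
    exact ⟨connectedComponentIn_subset _ _ hx, connectedComponentIn_eq hx⟩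
  have hopen : ∀ s ∈ D, IsOpen s := by
    intro s hs
    rw [hD] at hs
    obtain ⟨p, hp, hvp, rfl⟩ := hs
    exact hOopen.connectedComponentIn
  have hnonempty : ∀ s ∈ D, s.Nonempty := by
    intro s hs
    rw [hD] at hs
    obtain ⟨p, hp, hvp, rfl⟩ := hs
    exact ⟨p, mem_connectedComponentIn ⟨hp, hvp⟩⟩
  set U := ⋃₀ V with hUdef
  set W := ⋃₀ (D \ V) with hWdef
  have hU : IsOpen U := isOpen_sUnion fun s hs => hopen s (hVD hs)
  have hW : IsOpen W := isOpen_sUnion fun s hs => hopen s hs.1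
  have hOUW : O ⊆ U ∪ W := by
    intro x hx
    by_cases h : connectedComponentIn O x ∈ V
    · exact Or.inl ⟨_, h, mem_connectedComponentIn hx⟩
    · exact Or.inr ⟨_, ⟨hcomp x hx, h⟩, mem_connectedComponentIn hx⟩
  have hdisj : Disjoint U W := by
    rw [Set.disjoint_left]
    rintro x ⟨s, hs, hxs⟩ ⟨t, ht, hxt⟩
    apply ht.2
    rw [(heq t ht.1 x hxt).2, ← (heq s (hVD hs) x hxs).2]; exact hs
  have hdense : G ⊆ closure O := by
    intro x hx
    by_contra hcon
    apply hvnt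
    refine hva.eqOn_zero_of_preconnected_of_eventuallyEq_zero hGconn.isPreconnected hx ?_
    filter_upwards [hGopen.mem_nhds hx, isClosed_closure.isOpen_compl.mem_nhds hcon] with y hy hy2
    by_contra h
    exact hy2 (subset_closure ⟨hy, h⟩)
  have hcov : G ⊆ closure U ∪ closure W := by
    rw [← closure_union]; exact hdense.trans (closure_mono hOUW)
  have hFne : (G ∩ (closure U ∩ closure W)).Nonempty := by
    refine isPreconnected_closed_iff.1 hGconn.isPreconnected _ _ isClosed_closure isClosed_closure
      hcov ?_ ?_
    · obtain ⟨s, hs⟩ := hVne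
      obtain ⟨x, hx⟩ := hnonempty s (hVD hs)
      exact ⟨x, (heq s (hVD hs) x hx).1.1, subset_closure ⟨s, hs, hx⟩⟩
    · obtain ⟨s, hs, hsV⟩ : (D \ V).Nonempty := by
        rw [Set.diff_nonempty]; intro h; exact hne (hVD.antisymm h)
      obtain ⟨x, hx⟩ := hnonempty s hs
      exact ⟨x, (heq s hs x hx).1.1, subset_closure ⟨s, ⟨hs, hsV⟩, hx⟩⟩
  have hvF : ∀ x ∈ G ∩ (closure U ∩ closure W), v x = 0 := by
    rintro x ⟨hx, hxU, hxW⟩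
    by_contra h
    rcases hOUW ⟨hx, h⟩ with h' | h'
    · exact Set.disjoint_left.1 (hdisj.closure_right hU) h' hxW
    · exact Set.disjoint_left.1 (hdisj.closure_left hW) hxU h'
  obtain ⟨p, hp, hdp⟩ := exists_regular hGopen hGconn.isPreconnected hU hW hcov k hva hHelm hvnt
    hvF hFne
  obtain ⟨B, hBG, hB, hpB, h1, h2, h3, hBd, hcl, -, hside⟩ :=
    sep_local hGopen hU hW hcov hva hvF hp hdp
  have hport := regular_portion hBG hB hpB (hvF p hp) h3 hBd
  -- a side `T` of the nodal set lies in a single nodal domain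
  have hdom : ∀ T ⊆ B, IsPreconnected T → (∀ x ∈ T, v x ≠ 0) →
      B ∩ {x | v x = 0} ⊆ closure T → ∃ s ∈ D, (Disjoint T U → s ∉ V) ∧ (Disjoint T W → s ∈ V) ∧
        B ∩ {x | v x = 0} ⊆ frontier s := by
    intro T hTB hT hT0 hTcl
    obtain ⟨t, ht⟩ : T.Nonempty := closure_nonempty_iff.1 ⟨p, hTcl ⟨hpB, hvF p hp⟩⟩
    have hTO : T ⊆ O := fun x hx => ⟨hBG (hTB hx), hT0 x hx⟩
    have hTs := hT.subset_connectedComponentIn ht hTO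
    have hsD := hcomp t (hTO ht)
    refine ⟨_, hsD, ?_, ?_, ?_⟩
    · intro hd hs
      exact Set.disjoint_left.1 hd ht ⟨_, hs, hTs ht⟩
    · intro hd
      by_contra hs
      exact Set.disjoint_left.1 hd ht ⟨_, ⟨hsD, hs⟩, hTs ht⟩
    · intro x hx
      rw [(hopen _ hsD).frontier_eq]
      exact ⟨closure_mono hTs (hTcl hx), fun hxs => (heq _ hsD x hxs).1.2 hx.2⟩
  obtain ⟨s, hs, hsU, hsW, hsf⟩ := hdom _ inter_subset_left h1 (fun x hx => ne_of_gt hx.2)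
    (fun x hx => (hcl hx).1)
  obtain ⟨t, ht, htU, htW, htf⟩ := hdom _ inter_subset_left h2 (fun x hx => ne_of_lt hx.2)
    (fun x hx => (hcl hx).2)
  rcases hside with ⟨ha, hb⟩ | ⟨ha, hb⟩
  · exact ⟨t, htW hb, s, ⟨hs, hsU ha⟩, _, hport, fun x hx => ⟨htf hx, hsf hx⟩⟩
  · exact ⟨s, hsW ha, t, ⟨ht, htU hb⟩, _, hport, fun x hx => ⟨hsf hx, htf hx⟩⟩

/-- the (countably many) nodal domains of a nontrivial Helmholtz
solution can be enumerated so that each one (after the first) shares a regular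
portion of the nodal set with the boundary of an earlier one. -/
theorem stmt4 {N : ℕ} (G : Set (EuclideanSpace ℝ (Fin N)))
    (hGopen : IsOpen G) (hGconn : IsConnected G)
    (k : ℝ) (hk : 0 < k) (v : EuclideanSpace ℝ (Fin N) → ℝ)
    (hva : AnalyticOnNhd ℝ v G)
    (hHelm : ∀ x ∈ G, lap v x + k ^ 2 * v x = 0)
    (hvnt : ¬ ∀ x ∈ G, v x = 0)
    (𝒟 : Set (Set (EuclideanSpace ℝ (Fin N))))
    (h𝒟 : 𝒟 = {s | ∃ p, p ∈ G ∧ v p ≠ 0 ∧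
      s = connectedComponentIn {x ∈ G | v x ≠ 0} p})
    (hcount : 𝒟.Countable) :
    ∃ (n : ℕ∞) (A : ℕ → Set (EuclideanSpace ℝ (Fin N))),
      (∀ j : ℕ, (j : ℕ∞) < n → A j ∈ 𝒟) ∧
      (∀ s ∈ 𝒟, ∃ j : ℕ, (j : ℕ∞) < n ∧ A j = s) ∧
      (∀ i j : ℕ, (i : ℕ∞) < n → (j : ℕ∞) < n → A i = A j → i = j) ∧
      (∀ j : ℕ, 1 ≤ j → (j : ℕ∞) < n → ∃ i < j,
        ∃ S : Set (EuclideanSpace ℝ (Fin N)), IsRegularPortion G v S ∧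
          S ⊆ frontier (A i) ∩ frontier (A j)) := by
  refine enum_aux 𝒟 hcount ?_ (fun a b => ∃ S : Set (EuclideanSpace ℝ (Fin N)),
    IsRegularPortion G v S ∧ S ⊆ frontier a ∩ frontier b)
    (fun V h1 h2 h3 => adj_aux G hGopen hGconn k v hva hHelm hvnt 𝒟 h𝒟 V h1 h2 h3)
  push Not at hvnt
  obtain ⟨x, hx, hvx⟩ := hvnt
  exact ⟨_, by rw [h𝒟]; exact ⟨x, hx, hvx, rfl⟩⟩
end

section
/- Let A, B be disjoint connected open subsets of ℝ^N and Σ an open connected subset of a smooth hypersurface with Σ ⊆ ∂A ∩ ∂B, such that near each point of Σ the complement of Σ locally consists of exactly the two sides lying in A and B. Given points a ∈ A and b ∈ B, there exists a C¹ regular curve from a to b contained in A ∪ Σ ∪ B that crosses Σ exactly once and orthogonally. -/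
open Metric Set

def RegPath {E : Type*} [NormedAddCommGroup E] [NormedSpace ℝ E] (K : Set E) (p v q w : E) : Prop :=
  ∃ (T : ℝ) (γ γ' : ℝ → E), 0 < T ∧ γ 0 = p ∧ γ T = q ∧ γ' 0 = v ∧ γ' T = w ∧
    (∀ t, HasDerivAt γ (γ' t) t) ∧ Continuous γ' ∧
    (∀ t ∈ Icc 0 T, γ' t ≠ 0) ∧ (∀ t ∈ Icc 0 T, γ t ∈ K)

section
variable {E : Type*} [NormedAddCommGroup E] [NormedSpace ℝ E]

lemma glue (T : ℝ) (γ₁ γ₁' γ₂ γ₂' : ℝ → E)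
    (h1 : ∀ t, HasDerivAt γ₁ (γ₁' t) t) (h1c : Continuous γ₁')
    (h2 : ∀ t, HasDerivAt γ₂ (γ₂' t) t) (h2c : Continuous γ₂')
    (he : γ₁ T = γ₂ 0) (he' : γ₁' T = γ₂' 0) :
    ∃ γ γ' : ℝ → E, (∀ t, HasDerivAt γ (γ' t) t) ∧ Continuous γ' ∧
      (∀ t ≤ T, γ t = γ₁ t ∧ γ' t = γ₁' t) ∧
      (∀ t, T ≤ t → γ t = γ₂ (t - T) ∧ γ' t = γ₂' (t - T)) := by
  have hA : ∀ t ≤ T, (if t ≤ T then γ₁ t else γ₂ (t - T)) = γ₁ t := fun t ht => if_pos ht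
  have hA' : ∀ t ≤ T, (if t ≤ T then γ₁' t else γ₂' (t - T)) = γ₁' t := fun t ht => if_pos ht
  have hB : ∀ t, T ≤ t → (if t ≤ T then γ₁ t else γ₂ (t - T)) = γ₂ (t - T) := by
    intro t ht
    rcases ht.eq_or_lt with rfl | h
    · simp [he]
    · exact if_neg (not_le.2 h)
  have hB' : ∀ t, T ≤ t → (if t ≤ T then γ₁' t else γ₂' (t - T)) = γ₂' (t - T) := by
    intro t ht
    rcases ht.eq_or_lt with rfl | h
    · simp [he']
    · exact if_neg (not_le.2 h)
  refine ⟨fun t => if t ≤ T then γ₁ t else γ₂ (t - T),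
    fun t => if t ≤ T then γ₁' t else γ₂' (t - T), ?_, ?_, fun t ht => ⟨hA t ht, hA' t ht⟩,
    fun t ht => ⟨hB t ht, hB' t ht⟩⟩
  · have h2' : ∀ t, HasDerivAt (fun t => γ₂ (t - T)) (γ₂' (t - T)) t := fun t =>
      (h2 (t - T)).comp_sub_const t T
    have L : ∀ t ≤ T, HasDerivWithinAt (fun t => if t ≤ T then γ₁ t else γ₂ (t - T))
        (if t ≤ T then γ₁' t else γ₂' (t - T)) (Iic T) t := by
      intro t ht
      rw [hA' t ht]
      exact (h1 t).hasDerivWithinAt.congr (fun x hx => hA x hx) (hA t ht)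
    have R : ∀ t, T ≤ t → HasDerivWithinAt (fun t => if t ≤ T then γ₁ t else γ₂ (t - T))
        (if t ≤ T then γ₁' t else γ₂' (t - T)) (Ici T) t := by
      intro t ht
      rw [hB' t ht]
      exact (h2' t).hasDerivWithinAt.congr (fun x hx => hB x hx) (hB t ht)
    intro t
    rcases lt_trichotomy t T with h | rfl | h
    · exact (L t h.le).hasDerivAt (Iic_mem_nhds h)
    · have := (L t le_rfl).union (R t le_rfl)
      rwa [Iic_union_Ici, hasDerivWithinAt_univ] at this
    · exact (R t h.le).hasDerivAt (Ici_mem_nhds h)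
  · refine Continuous.if_le h1c (h2c.comp (continuous_id.sub continuous_const)) continuous_id
      continuous_const ?_
    intro x hx
    have hx' : x = T := hx
    rw [hx']
    simp [he']

lemma RegPath.trans {K : Set E} {p v q w r x : E} (h1 : RegPath K p v q w)
    (h2 : RegPath K q w r x) : RegPath K p v r x := by
  obtain ⟨T, γ₁, γ₁', hT, a1, a2, a3, a4, a5, a6, a7, a8⟩ := h1
  obtain ⟨T', γ₂, γ₂', hT', b1, b2, b3, b4, b5, b6, b7, b8⟩ := h2
  obtain ⟨γ, γ', c1, c2, c3, c4⟩ := glue T γ₁ γ₁' γ₂ γ₂' a5 a6 b5 b6 (by rw [a2, b1]) (by rw [a4, b3])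
  refine ⟨T + T', γ, γ', by linarith, ?_, ?_, ?_, ?_, c1, c2, ?_, ?_⟩
  · rw [(c3 0 hT.le).1, a1]
  · rw [(c4 (T + T') (by linarith)).1]; simpa using b2
  · rw [(c3 0 hT.le).2, a3]
  · rw [(c4 (T + T') (by linarith)).2]; simpa using b4
  · intro t ht
    rcases le_total t T with h | h
    · rw [(c3 t h).2]; exact a7 t ⟨ht.1, h⟩
    · rw [(c4 t h).2]; exact b7 _ ⟨by linarith, by linarith [ht.2]⟩
  · intro t ht
    rcases le_total t T with h | h
    · rw [(c3 t h).1]; exact a8 t ⟨ht.1, h⟩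
    · rw [(c4 t h).1]; exact b8 _ ⟨by linarith, by linarith [ht.2]⟩

lemma RegPath.scale {K : Set E} {p v q w : E} (h1 : RegPath K p v q w) {c : ℝ} (hc : 0 < c) :
    RegPath K p (c • v) q (c • w) := by
  obtain ⟨T, γ, γ', hT, a1, a2, a3, a4, a5, a6, a7, a8⟩ := h1
  have key : ∀ t ∈ Icc 0 (T / c), c * t ∈ Icc 0 T := by
    intro t ht
    refine ⟨mul_nonneg hc.le ht.1, ?_⟩
    have := (le_div_iff₀ hc).1 ht.2
    linarith
  refine ⟨T / c, fun t => γ (c * t), fun t => c • γ' (c * t), div_pos hT hc, by simpa, ?_, by simp [a3],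
    ?_, ?_, ?_, ?_, ?_⟩
  · simp [mul_div_cancel₀ _ hc.ne', a2]
  · simp [mul_div_cancel₀ _ hc.ne', a4]
  · intro t
    have h : HasDerivAt (fun t : ℝ => c * t) c t := by simpa using (hasDerivAt_id t).const_mul c
    exact (a5 (c * t)).scomp t h
  · exact (a6.comp (continuous_const.mul continuous_id)).const_smul c
  · intro t ht
    exact smul_ne_zero hc.ne' (a7 _ (key t ht))
  · intro t ht
    exact a8 _ (key t ht)

lemma RegPath.line {K : Set E} {p q : E} (hpq : p ≠ q) (h : segment ℝ p q ⊆ K) :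
    RegPath K p (q - p) q (q - p) := by
  refine ⟨1, fun t => p + t • (q - p), fun _ => q - p, one_pos, by simp, by simp, rfl, rfl, ?_,
    continuous_const, fun _ _ => sub_ne_zero.2 hpq.symm, ?_⟩
  · intro t
    simpa using ((hasDerivAt_id t).smul_const (q - p)).const_add p
  · intro t ht
    apply h
    rw [segment_eq_image']
    exact ⟨t, ht, rfl⟩

lemma RegPath.turn0 {K : Set E} (hK : IsOpen K) {p v w : E} (hp : p ∈ K)
    (hli : ∀ s t : ℝ, s • v + t • w = 0 → s = 0 ∧ t = 0) : RegPath K p v p w := by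
  obtain ⟨r, hr, hb⟩ := Metric.isOpen_iff.1 hK p hp
  set M := ‖v‖ + ‖w‖ + 1 with hM
  have hMpos : 0 < M := by positivity
  set ε := r / (2 * M) with hε
  have hεpos : 0 < ε := by positivity
  have hεM : ε * M < r := by
    have : ε * M = r / 2 := by rw [hε]; field_simp
    linarith
  have main : RegPath K p (ε • v) p (ε • w) := by
    refine ⟨1, fun t => p + ε • ((t * (1 - t) ^ 2) • v + (t ^ 3 - t ^ 2) • w),
      fun t => ε • (((1 - t) * (1 - 3 * t)) • v + (t * (3 * t - 2)) • w), one_pos, by simp, by simp,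
      by simp, by norm_num, ?_, by fun_prop, ?_, ?_⟩
    · intro t
      have h1 : HasDerivAt (fun t : ℝ => t * (1 - t) ^ 2) ((1 - t) * (1 - 3 * t)) t := by
        have := (hasDerivAt_id t).mul (((hasDerivAt_id t).const_sub 1).pow 2)
        refine this.congr_deriv ?_
        simp; ring
      have h2 : HasDerivAt (fun t : ℝ => t ^ 3 - t ^ 2) (t * (3 * t - 2)) t := by
        have := (hasDerivAt_pow 3 t).sub (hasDerivAt_pow 2 t)
        refine this.congr_deriv ?_
        norm_num; ring
      exact (((h1.smul_const v).add (h2.smul_const w)).const_smul ε).const_add p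
    · intro t _ h0
      have h := (smul_eq_zero.1 h0).resolve_left hεpos.ne'
      obtain ⟨h1, h2⟩ := hli _ _ h
      rcases mul_eq_zero.1 h1 with h1 | h1 <;> rcases mul_eq_zero.1 h2 with h2 | h2 <;> linarith
    · intro t ht
      apply hb
      have e1 : |t * (1 - t) ^ 2| ≤ 1 := by
        rw [abs_le]; constructor <;> nlinarith [ht.1, ht.2, mul_nonneg ht.1 (sq_nonneg (1 - t)), mul_nonneg ht.1 (sub_nonneg.2 ht.2)]
      have e2 : |t ^ 3 - t ^ 2| ≤ 1 := by
        rw [abs_le]; constructor <;> nlinarith [ht.1, ht.2, mul_nonneg (sq_nonneg t) (sub_nonneg.2 ht.2), mul_nonneg (sq_nonneg t) ht.1, mul_nonneg ht.1 (sub_nonneg.2 ht.2)]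
      rw [mem_ball, dist_eq_norm, add_sub_cancel_left, norm_smul, Real.norm_of_nonneg hεpos.le]
      refine lt_of_le_of_lt (mul_le_mul_of_nonneg_left ?_ hεpos.le) hεM
      calc _ ≤ ‖(t * (1 - t) ^ 2) • v‖ + ‖(t ^ 3 - t ^ 2) • w‖ := norm_add_le _ _
        _ ≤ 1 * ‖v‖ + 1 * ‖w‖ := by
          rw [norm_smul, norm_smul, Real.norm_eq_abs, Real.norm_eq_abs]
          gcongr
        _ ≤ M := by rw [hM]; linarith
  have := main.scale (inv_pos.2 hεpos)
  simpa [smul_smul, inv_mul_cancel₀ hεpos.ne'] using this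

lemma RegPath.turn (hE : ∀ v : E, ∃ x : E, ∀ c : ℝ, x ≠ c • v) {K : Set E} (hK : IsOpen K)
    {p v w : E} (hp : p ∈ K) (hv : v ≠ 0) (hw : w ≠ 0) : RegPath K p v p w := by
  have aux : ∀ {v x : E}, v ≠ 0 → (∀ c : ℝ, x ≠ c • v) →
      ∀ s t : ℝ, s • v + t • x = 0 → s = 0 ∧ t = 0 := by
    intro v x hv hx s t h
    have ht : t = 0 := by
      by_contra ht
      apply hx (-(t⁻¹ * s))
      have h2 : t • x = -(s • v) := eq_neg_of_add_eq_zero_right h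
      calc x = t⁻¹ • (t • x) := by rw [smul_smul, inv_mul_cancel₀ ht, one_smul]
        _ = _ := by rw [h2, smul_neg, smul_smul, neg_smul]
    subst ht
    simp only [zero_smul, add_zero] at h
    exact ⟨(smul_eq_zero.1 h).resolve_right hv, rfl⟩
  by_cases hc : ∀ c : ℝ, w ≠ c • v
  · exact RegPath.turn0 hK hp (aux hv hc)
  · push Not at hc
    obtain ⟨c, rfl⟩ := hc
    obtain ⟨x, hx⟩ := hE v
    refine (RegPath.turn0 hK hp (aux hv hx)).trans (RegPath.turn0 hK hp ?_)
    intro s t h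
    have := aux hw (x := x) (fun d => by rw [smul_smul]; exact hx _) t s (by rw [add_comm]; exact h)
    exact this.symm

lemma RegPath.all (hE : ∀ v : E, ∃ x : E, ∀ c : ℝ, x ≠ c • v) {K : Set E} (hK : IsOpen K)
    (hc : IsPreconnected K) {p q : E} (hp : p ∈ K) (hq : q ∈ K) :
    ∀ v w : E, v ≠ 0 → w ≠ 0 → RegPath K p v q w := by
  refine hc.induction₂' (fun p q => ∀ v w : E, v ≠ 0 → w ≠ 0 → RegPath K p v q w) ?_ ?_ hp hq
  · intro x hx
    obtain ⟨r, hr, hb⟩ := Metric.isOpen_iff.1 hK x hx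
    have key : ∀ y ∈ ball x r, ∀ z ∈ ball x r, ∀ v w : E, v ≠ 0 → w ≠ 0 → RegPath K y v z w := by
      intro y hy z hz v w hv hw
      by_cases h : y = z
      · subst h; exact RegPath.turn hE hK (hb hy) hv hw
      · have h0 : z - y ≠ 0 := sub_ne_zero.2 (Ne.symm h)
        exact ((RegPath.turn hE hK (hb hy) hv h0).trans
          (RegPath.line h (((convex_ball x r).segment_subset hy hz).trans hb))).trans
          (RegPath.turn hE hK (hb hz) h0 hw)
    filter_upwards [mem_nhdsWithin_of_mem_nhds (ball_mem_nhds x hr)] with y hy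
    exact ⟨key x (mem_ball_self hr) y hy, key y hy x (mem_ball_self hr)⟩
  · intro x y z _ _ _ h1 h2 v w hv hw
    exact (h1 v v hv hv).trans (h2 v w hv hw)

/-- local structure -/
lemma mono_dir (f : E → ℝ) (hf : ContDiff ℝ 1 f) (z n : E) (r : ℝ)
    (hpos : ∀ y ∈ ball z r, 0 < fderiv ℝ f y n) (x : E) (s : ℝ) (hs : 0 < s) (hx : x ∈ ball z r)
    (hx' : x + s • n ∈ ball z r) : f x < f (x + s • n) := by
  have hseg : ∀ t ∈ Icc 0 s, x + t • n ∈ ball z r := by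
    intro t ht
    apply (convex_ball z r).segment_subset hx hx'
    rw [segment_eq_image']
    refine ⟨t / s, ⟨div_nonneg ht.1 hs.le, (div_le_one hs).2 ht.2⟩, ?_⟩
    simp [smul_smul, div_mul_cancel₀ _ hs.ne']
  have hd : ∀ t, HasDerivAt (fun t : ℝ => f (x + t • n)) (fderiv ℝ f (x + t • n) n) t := by
    intro t
    have h1 : HasDerivAt (fun t : ℝ => x + t • n) n t := by
      simpa using ((hasDerivAt_id t).smul_const n).const_add x
    exact ((hf.differentiable one_ne_zero) (x + t • n)).hasFDerivAt.comp_hasDerivAt t h1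
  have := strictMonoOn_of_deriv_pos (convex_Icc 0 s)
    (fun t _ => (hd t).continuousAt.continuousWithinAt) (by
      intro t ht
      rw [(hd t).deriv]
      exact hpos _ (hseg t (interior_subset ht)))
  simpa using this (left_mem_Icc.2 hs.le) (right_mem_Icc.2 hs.le) hs

lemma side (f : E → ℝ) (hf : ContDiff ℝ 1 f) (z n : E) (hz : f z = 0) (hn : 0 < fderiv ℝ f z n)
    (A B : Set E) (hA : IsOpen A) (hB : IsOpen B) (hAB : Disjoint A B) (ε : ℝ) (hε : 0 < ε)
    (hcov : ∀ x ∈ ball z ε, f x ≠ 0 → x ∈ A ∪ B) :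
    ∃ ρ > 0, ((∀ x ∈ ball z ρ, 0 < f x → x ∈ A) ∨ (∀ x ∈ ball z ρ, 0 < f x → x ∈ B)) ∧
      ∀ s : ℝ, 0 < s → z + s • n ∈ ball z ρ → 0 < f (z + s • n) := by
  have hcont : Continuous (fun y => fderiv ℝ f y n) :=
    (hf.continuous_fderiv one_ne_zero).clm_apply continuous_const
  obtain ⟨r₀, hr₀, hr₀'⟩ := Metric.isOpen_iff.1 (isOpen_lt continuous_const hcont) z hn
  set r := min r₀ ε with hrdef
  have hr : 0 < r := lt_min hr₀ hε
  have hpos : ∀ y ∈ ball z r, 0 < fderiv ℝ f y n := fun y hy =>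
    hr₀' (ball_subset_ball (min_le_left _ _) hy)
  have hn0 : n ≠ 0 := by rintro rfl; simp at hn
  have hnn : 0 < ‖n‖ := norm_pos_iff.2 hn0
  set s := r / (2 * ‖n‖) with hs
  have hspos : 0 < s := by positivity
  have hsn : s * ‖n‖ = r / 2 := by rw [hs]; field_simp
  have hw : z + s • n ∈ ball z r := by
    rw [mem_ball, dist_eq_norm, add_sub_cancel_left, norm_smul, Real.norm_of_nonneg hspos.le]
    linarith
  have hfw : 0 < f (z + s • n) := by
    have := mono_dir f hf z n r hpos z s hspos (mem_ball_self hr) hw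
    rwa [hz] at this
  obtain ⟨ρ₀, hρ₀, hρ₀'⟩ := Metric.isOpen_iff.1 (isOpen_lt continuous_const hf.continuous) _ hfw
  set ρ := min ρ₀ (r / 2) with hρdef
  have hρ : 0 < ρ := lt_min hρ₀ (by linarith)
  have hρr : ρ ≤ r / 2 := min_le_right _ _
  have hsub : ∀ P : Set E, (∀ K : Set E, IsPreconnected K → z + s • n ∈ K →
      K ⊆ {x | x ∈ ball z r ∧ 0 < f x} → K ⊆ P) → ∀ x ∈ ball z ρ, 0 < f x → x ∈ P := by
    intro P hP x hx hfx
    have hxr : x ∈ ball z r := ball_subset_ball (by linarith) hx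
    have hd : dist (x + s • n) (z + s • n) < ρ := by
      rw [dist_add_right]; exact hx
    have hy : x + s • n ∈ ball (z + s • n) ρ := hd
    have hyr : ball (z + s • n) ρ ⊆ ball z r := by
      apply ball_subset_ball'
      rw [dist_eq_norm, add_sub_cancel_left, norm_smul, Real.norm_of_nonneg hspos.le]
      linarith
    apply hP (segment ℝ x (x + s • n) ∪ ball (z + s • n) ρ) _ (Or.inr (mem_ball_self hρ)) _
      (Or.inl (left_mem_segment ℝ _ _))
    · exact IsPreconnected.union (x + s • n) (right_mem_segment ℝ _ _) hy
        (convex_segment _ _).isPreconnected (convex_ball _ _).isPreconnected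
    · rintro y (hy' | hy')
      · refine ⟨(convex_ball z r).segment_subset hxr (hyr hy) hy', ?_⟩
        have hy2 := (convex_ball z r).segment_subset hxr (hyr hy) hy'
        rw [segment_eq_image'] at hy'
        obtain ⟨t, ht, rfl⟩ := hy'
        simp only [add_sub_cancel_left, smul_smul] at hy2 ⊢
        rcases ht.1.eq_or_lt with h0 | h0
        · rw [← h0]; simpa using hfx
        · exact hfx.trans (mono_dir f hf z n r hpos x (t * s) (by positivity) hxr hy2)
      · exact ⟨hyr hy', hρ₀' (ball_subset_ball (min_le_left _ _) hy')⟩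
  refine ⟨ρ, hρ, ?_, ?_⟩
  · have hcov' : {x | x ∈ ball z r ∧ 0 < f x} ⊆ A ∪ B := fun x hx =>
      hcov x (ball_subset_ball (min_le_right _ _) hx.1) hx.2.ne'
    rcases hcov' (show z + s • n ∈ _ from ⟨hw, hfw⟩) with h | h
    · left
      apply hsub
      intro K hK hwK hKs
      exact hK.subset_left_of_subset_union hA hB hAB (hKs.trans hcov') ⟨_, hwK, h⟩
    · right
      apply hsub
      intro K hK hwK hKs
      exact hK.subset_right_of_subset_union hA hB hAB (hKs.trans hcov') ⟨_, hwK, h⟩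
  · intro t ht htm
    have := mono_dir f hf z n r hpos z t ht (mem_ball_self hr)
      (ball_subset_ball (by linarith) htm)
    rwa [hz] at this

lemma crossing (f : E → ℝ) (hf : ContDiff ℝ 1 f) (z n : E) (hz : f z = 0)
    (hn : 0 < fderiv ℝ f z n)
    (A B : Set E) (hA : IsOpen A) (hB : IsOpen B) (hAB : Disjoint A B) (ε : ℝ) (hε : 0 < ε)
    (hcov : ∀ x ∈ ball z ε, f x ≠ 0 → x ∈ A ∪ B)
    (hzero : ∀ x ∈ ball z ε, f x = 0 → x ∉ A ∧ x ∉ B)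
    (hzA : z ∈ closure A) (hzB : z ∈ closure B) :
    ∃ c : ℝ, c ≠ 0 ∧ ∃ δ > 0, ∀ s : ℝ, 0 < s → s ≤ δ →
      z - s • (c • n) ∈ A ∧ z + s • (c • n) ∈ B := by
  obtain ⟨ρ₁, hρ₁, h1, h1'⟩ := side f hf z n hz hn A B hA hB hAB ε hε hcov
  obtain ⟨ρ₂, hρ₂, h2, h2'⟩ := side (fun x => - f x) hf.neg z (-n) (by simp [hz])
    (by rw [fderiv_fun_neg]; simpa using hn) A B hA hB hAB ε hε
    (fun x hx h => hcov x hx (by simpa using h))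
  simp only [Left.neg_pos_iff] at h2 h2'
  have hno : ∀ P Q : Set E, Disjoint P Q → z ∈ closure Q →
      (∀ x ∈ ball z ε, f x = 0 → x ∉ Q) →
      (∀ x ∈ ball z ρ₁, 0 < f x → x ∈ P) → (∀ x ∈ ball z ρ₂, f x < 0 → x ∈ P) → False := by
    intro P Q hd hzQ h0 hp hm
    obtain ⟨y, hyQ, hy⟩ := Metric.mem_closure_iff.1 hzQ (min ε (min ρ₁ ρ₂))
      (lt_min hε (lt_min hρ₁ hρ₂))
    rw [dist_comm, lt_min_iff, lt_min_iff] at hy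
    rcases lt_trichotomy (f y) 0 with h | h | h
    · exact hd.le_bot ⟨hm y hy.2.2 h, hyQ⟩
    · exact h0 y hy.1 h hyQ
    · exact hd.le_bot ⟨hp y hy.2.1 h, hyQ⟩
  have hn0 : n ≠ 0 := by rintro rfl; simp at hn
  have hnn : 0 < ‖n‖ := norm_pos_iff.2 hn0
  have hsmall : ∀ s : ℝ, 0 < s → s ≤ min ρ₁ ρ₂ / (2 * ‖n‖) →
      (z + s • n ∈ ball z ρ₁ ∧ 0 < f (z + s • n)) ∧ (z - s • n ∈ ball z ρ₂ ∧ f (z - s • n) < 0) := by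
    intro s hs hs'
    have hm : 0 < min ρ₁ ρ₂ := lt_min hρ₁ hρ₂
    have : s * ‖n‖ < min ρ₁ ρ₂ := by
      have := (le_div_iff₀ (by positivity)).1 hs'
      nlinarith
    rw [lt_min_iff] at this
    have e1 : z + s • n ∈ ball z ρ₁ := by
      rw [mem_ball, dist_eq_norm, add_sub_cancel_left, norm_smul, Real.norm_of_nonneg hs.le]
      exact this.1
    have e2 : z - s • n ∈ ball z ρ₂ := by
      rw [mem_ball, dist_eq_norm, sub_sub_cancel_left, norm_neg, norm_smul,
        Real.norm_of_nonneg hs.le]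
      exact this.2
    refine ⟨⟨e1, h1' s hs e1⟩, e2, ?_⟩
    have := h2' s hs (by rw [smul_neg, ← sub_eq_add_neg]; exact e2)
    rwa [smul_neg, ← sub_eq_add_neg] at this
  have hδ : 0 < min ρ₁ ρ₂ / (2 * ‖n‖) := div_pos (lt_min hρ₁ hρ₂) (by positivity)
  rcases h1 with h1 | h1 <;> rcases h2 with h2 | h2
  · exact (hno A B hAB hzB (fun x hx h => (hzero x hx h).2) h1 h2).elim
  · refine ⟨-1, by norm_num, _, hδ, fun s hs hs' => ?_⟩
    obtain ⟨⟨p1, p2⟩, p3, p4⟩ := hsmall s hs hs'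
    have q1 := h1 _ p1 p2
    have q2 := h2 _ p3 p4
    simp only [neg_smul, one_smul, smul_neg, sub_neg_eq_add, ← sub_eq_add_neg]
    exact ⟨q1, q2⟩
  · refine ⟨1, by norm_num, _, hδ, fun s hs hs' => ?_⟩
    obtain ⟨⟨p1, p2⟩, p3, p4⟩ := hsmall s hs hs'
    simp only [one_smul]
    exact ⟨h2 _ p3 p4, h1 _ p1 p2⟩
  · exact (hno B A hAB.symm hzA (fun x hx h => (hzero x hx h).1) h1 h2).elim

lemma final_glue (A B : Set E) (hA : IsOpen A) (hB : IsOpen B)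
    (hAc : IsPreconnected A) (hBc : IsPreconnected B)
    (hE : ∀ v : E, ∃ x : E, ∀ c : ℝ, x ≠ c • v) (a b z n : E) (ha : a ∈ A) (hb : b ∈ B)
    (hn : n ≠ 0) (δ : ℝ) (hδ : 0 < δ)
    (hside : ∀ s : ℝ, 0 < s → s ≤ δ → z - s • n ∈ A ∧ z + s • n ∈ B) :
    ∃ (T : ℝ) (γ γ' : ℝ → E) (t₀ : ℝ), 0 < T ∧ γ 0 = a ∧ γ T = b ∧
      (∀ t, HasDerivAt γ (γ' t) t) ∧ Continuous γ' ∧ (∀ t ∈ Icc 0 T, γ' t ≠ 0) ∧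
      t₀ ∈ Icc 0 T ∧ γ t₀ = z ∧ γ' t₀ = n ∧ (∀ t ∈ Icc 0 T, t ≠ t₀ → γ t ∈ A ∪ B) := by
  obtain ⟨T₁, γ₁, γ₁', hT₁, a1, a2, a3, a4, a5, a6, a7, a8⟩ :=
    RegPath.all hE hA hAc ha (hside δ hδ le_rfl).1 n n hn hn
  obtain ⟨T₂, γ₂, γ₂', hT₂, b1, b2, b3, b4, b5, b6, b7, b8⟩ :=
    RegPath.all hE hB hBc (hside δ hδ le_rfl).2 hb n n hn hn
  obtain ⟨γ₃, γ₃', c1, c2, c3, c4⟩ := glue (2 * δ) (fun t => z + (t - δ) • n) (fun _ => n) γ₂ γ₂'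
    (by
      intro t
      simpa using (((hasDerivAt_id t).sub_const δ).smul_const n).const_add z)
    continuous_const b5 b6 (by rw [b1]; congr 2; ring) (by rw [b3])
  obtain ⟨γ, γ', d1, d2, d3, d4⟩ := glue T₁ γ₁ γ₁' γ₃ γ₃' a5 a6 c1 c2
    (by rw [a2, (c3 0 (by linarith)).1]; simp [sub_eq_add_neg])
    (by rw [a4, (c3 0 (by linarith)).2])
  refine ⟨T₁ + (2 * δ + T₂), γ, γ', T₁ + δ, by linarith, ?_, ?_, d1, d2, ?_, ⟨by linarith, by linarith⟩,
    ?_, ?_, ?_⟩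
  · rw [(d3 0 hT₁.le).1, a1]
  · rw [(d4 _ (by linarith)).1, (c4 _ (by linarith)).1, ← b2]; congr 1; ring
  · intro t ht
    rcases le_total t T₁ with h | h
    · rw [(d3 t h).2]; exact a7 t ⟨ht.1, h⟩
    · rw [(d4 t h).2]
      rcases le_total (t - T₁) (2 * δ) with h' | h'
      · rw [(c3 _ h').2]; exact hn
      · rw [(c4 _ h').2]; exact b7 _ ⟨by linarith, by linarith [ht.2]⟩
  · rw [(d4 _ (by linarith)).1, (c3 _ (by linarith)).1]; simp
  · rw [(d4 _ (by linarith)).2, (c3 _ (by linarith)).2]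
  · intro t ht hne
    rcases le_total t T₁ with h | h
    · rw [(d3 t h).1]; exact Or.inl (a8 t ⟨ht.1, h⟩)
    · rw [(d4 t h).1]
      rcases le_total (t - T₁) (2 * δ) with h' | h'
      · rw [(c3 _ h').1]
        rcases lt_or_gt_of_ne hne with hl | hl
        · left
          have := (hside (-(t - T₁ - δ)) (by linarith) (by linarith)).1
          simpa only [neg_smul, sub_neg_eq_add] using this
        · right
          exact (hside (t - T₁ - δ) (by linarith) (by linarith)).2
      · rw [(c4 _ h').1]; exact Or.inr (b8 _ ⟨by linarith, by linarith [ht.2]⟩)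
end

section
variable {E : Type*} [NormedAddCommGroup E] [InnerProductSpace ℝ E]

lemma convex_of_line {v : E} (hv : v ≠ 0) (hE : ∀ x : E, ∃ c : ℝ, x = c • v) {A : Set E}
    (hA : IsPreconnected A) : Convex ℝ A := by
  have hvv : inner ℝ v v ≠ 0 := by simpa using hv
  have hinj : Function.Injective (innerSL ℝ v) := by
    intro x y h
    obtain ⟨c, rfl⟩ := hE x
    obtain ⟨d, rfl⟩ := hE y
    simp only [innerSL_apply_apply, inner_smul_right] at h
    rw [mul_right_cancel₀ hvv h]
  have h1 : Convex ℝ (innerSL ℝ v '' A) :=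
    (hA.image _ (innerSL ℝ v).continuous.continuousOn).ordConnected.convex
  have h2 := h1.linear_preimage (innerSL ℝ v).toLinearMap
  have h3 : (innerSL ℝ v).toLinearMap ⁻¹' (innerSL ℝ v '' A) = A := hinj.preimage_image A
  rwa [h3] at h2

lemma line_case {v : E} (hv : v ≠ 0) (hE : ∀ x : E, ∃ c : ℝ, x = c • v) {A B S : Set E}
    (hA : IsOpen A) (hB : IsOpen B) (hAc : IsPreconnected A) (hBc : IsPreconnected B)
    (hAB : Disjoint A B) (hSA : ∀ z ∈ S, z ∈ closure A ∧ z ∉ A) (hSB : ∀ z ∈ S, z ∈ closure B ∧ z ∉ B)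
    {a b z : E} (ha : a ∈ A) (hb : b ∈ B) (hz : z ∈ S) :
    (∀ t ∈ Icc (0 : ℝ) 1, a + t • (b - a) ∈ A ∪ S ∪ B) ∧
    (∃! t₀ : ℝ, t₀ ∈ Icc (0 : ℝ) 1 ∧ a + t₀ • (b - a) ∈ S) := by
  have cA := convex_of_line hv hE hAc
  have cB := convex_of_line hv hE hBc
  have oA : ∀ z ∈ S, openSegment ℝ a z ⊆ A := fun z hz => by
    have := cA.openSegment_interior_closure_subset_interior (hA.interior_eq.symm ▸ ha) (hSA z hz).1
    rwa [hA.interior_eq] at this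
  have oB : ∀ z ∈ S, openSegment ℝ z b ⊆ B := fun z hz => by
    have := cB.openSegment_closure_interior_subset_interior (hSB z hz).1 (hB.interior_eq.symm ▸ hb)
    rwa [hB.interior_eq] at this
  have haz : a ≠ z := fun h => (hSA z hz).2 (h ▸ ha)
  have hbz : b ≠ z := fun h => (hSB z hz).2 (h ▸ hb)
  have hab : a ≠ b := fun h => hAB.le_bot ⟨ha, h ▸ hb⟩
  have hcol : Collinear ℝ {a, z, b} := by
    rw [collinear_iff_exists_forall_eq_smul_vadd]
    refine ⟨0, v, fun p _ => ?_⟩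
    obtain ⟨c, hc⟩ := hE p
    exact ⟨c, by simpa using hc⟩
  have hzseg : z ∈ segment ℝ a b := by
    rcases hcol.wbtw_or_wbtw_or_wbtw with h | h | h
    · exact mem_segment_iff_wbtw.2 h
    · exfalso
      have := mem_openSegment_of_ne_left_right hbz.symm hab (mem_segment_iff_wbtw.2 h.symm |> fun h => by
        rw [segment_symm]; exact h)
      exact hAB.le_bot ⟨oA z hz (by rw [openSegment_symm]; exact this), hb⟩
    · exfalso
      have := mem_openSegment_of_ne_left_right hab.symm haz.symm (mem_segment_iff_wbtw.2 h)
      exact hAB.le_bot ⟨ha, oB z hz (by rw [openSegment_symm]; exact this)⟩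
  rw [segment_eq_image'] at hzseg
  obtain ⟨t₀, ht₀, rfl⟩ := hzseg
  have hlt : ∀ t₁ ∈ Icc (0 : ℝ) 1, ∀ t₂, t₁ < t₂ → a + t₂ • (b - a) ∈ S → a + t₁ • (b - a) ∈ A := by
    intro t₁ h1 t₂ h12 hS
    rcases h1.1.eq_or_lt with h0 | h0
    · rw [← h0]; simpa using ha
    · apply oA _ hS
      rw [openSegment_eq_image']
      have h2 : 0 < t₂ := h0.trans h12
      refine ⟨t₁ / t₂, ⟨by positivity, (div_lt_one h2).2 h12⟩, ?_⟩
      simp [smul_smul, div_mul_cancel₀ _ h2.ne']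
  refine ⟨?_, t₀, ⟨ht₀, hz⟩, ?_⟩
  · intro t ht
    rcases lt_trichotomy t t₀ with h | rfl | h
    · exact Or.inl (Or.inl (hlt t ht _ h hz))
    · exact Or.inl (Or.inr hz)
    · right
      rcases ht.2.eq_or_lt with h1 | h1
      · rw [h1]; simpa using hb
      · apply oB _ hz
        rw [openSegment_eq_image']
        have hp : 0 < 1 - t₀ := by linarith
        refine ⟨(t - t₀) / (1 - t₀), ⟨div_pos (by linarith) hp, (div_lt_one hp).2 (by linarith)⟩, ?_⟩
        have e : b - (a + t₀ • (b - a)) = (1 - t₀) • (b - a) := by module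
        simp only [e, smul_smul, div_mul_cancel₀ _ hp.ne']
        module
  · rintro t ⟨ht, hS⟩
    rcases lt_trichotomy t t₀ with h | h | h
    · exact ((hSA _ hS).2 (hlt t ht _ h hz)).elim
    · exact h
    · exact ((hSA _ hz).2 (hlt t₀ ht₀ _ h hS)).elim
end

/-- given disjoint connected open sets `A`, `B` and an open
connected piece `S` of a smooth regular hypersurface with `S ⊆ ∂A ∩ ∂B`,
locally two-sided with sides in `A` and `B`, any `a ∈ A` and `b ∈ B` can be
joined by a `C¹` regular curve in `A ∪ S ∪ B` crossing `S` exactly once and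
orthogonally. -/
theorem stmt17 {N : ℕ}
    (A B : Set (EuclideanSpace ℝ (Fin N)))
    (hAopen : IsOpen A) (hBopen : IsOpen B)
    (hAconn : IsConnected A) (hBconn : IsConnected B)
    (hdisj : Disjoint A B)
    (f : EuclideanSpace ℝ (Fin N) → ℝ) (hf : ContDiff ℝ (⊤ : ℕ∞) f)
    (S : Set (EuclideanSpace ℝ (Fin N))) (hSne : S.Nonempty)
    (hSconn : IsConnected S)
    (hSlevel : S ⊆ {x | f x = 0}) (hSreg : ∀ z ∈ S, gradient f z ≠ 0)
    (hSrelopen : ∃ U, IsOpen U ∧ S = U ∩ {x | f x = 0})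
    (hSfront : S ⊆ frontier A ∩ frontier B)
    (htwosided : ∀ z ∈ S, ∃ ε > 0, ball z ε \ S ⊆ A ∪ B)
    (a b : EuclideanSpace ℝ (Fin N)) (ha : a ∈ A) (hb : b ∈ B) :
    ∃ (γ : ℝ → EuclideanSpace ℝ (Fin N)) (γ' : ℝ → EuclideanSpace ℝ (Fin N)),
      γ 0 = a ∧ γ 1 = b ∧
      (∀ t ∈ Icc (0 : ℝ) 1, HasDerivWithinAt γ (γ' t) (Icc 0 1) t) ∧
      ContinuousOn γ' (Icc 0 1) ∧
      (∀ t ∈ Icc (0 : ℝ) 1, γ' t ≠ 0) ∧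
      (∀ t ∈ Icc (0 : ℝ) 1, γ t ∈ A ∪ S ∪ B) ∧
      (∃! t₀ : ℝ, t₀ ∈ Icc (0 : ℝ) 1 ∧ γ t₀ ∈ S) ∧
      (∀ t ∈ Icc (0 : ℝ) 1, γ t ∈ S →
        ∃ c : ℝ, c ≠ 0 ∧ γ' t = c • gradient f (γ t)) := by
  obtain ⟨z, hz⟩ := hSne
  have hSA : ∀ z ∈ S, z ∈ closure A ∧ z ∉ A := fun z hz => by
    have := (hSfront hz).1
    rwa [hAopen.frontier_eq] at this
  have hSB : ∀ z ∈ S, z ∈ closure B ∧ z ∉ B := fun z hz => by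
    have := (hSfront hz).2
    rwa [hBopen.frontier_eq] at this
  by_cases hE : ∀ v : EuclideanSpace ℝ (Fin N), ∃ x : EuclideanSpace ℝ (Fin N), ∀ c : ℝ, x ≠ c • v
  · have hf1 : ContDiff ℝ 1 f := hf.of_le (by exact_mod_cast le_top)
    have hgrad : 0 < fderiv ℝ f z (gradient f z) := by
      have h1 : HasGradientAt f (gradient f z) z :=
        ((hf1.differentiable one_ne_zero) z).hasGradientAt
      rw [h1.hasFDerivAt.fderiv]
      rw [InnerProductSpace.toDual_apply_apply]
      exact real_inner_self_pos.2 (hSreg z hz)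
    obtain ⟨U, hU, hSU⟩ := hSrelopen
    obtain ⟨ε₁, hε₁, h1⟩ := htwosided z hz
    have hzU : z ∈ U := by rw [hSU] at hz; exact hz.1
    obtain ⟨ε₂, hε₂, h2⟩ := Metric.isOpen_iff.1 hU z hzU
    obtain ⟨c, hc, δ, hδ, hside⟩ := crossing f hf1 z (gradient f z) (hSlevel hz) hgrad A B hAopen hBopen
      hdisj (min ε₁ ε₂) (lt_min hε₁ hε₂)
      (fun x hx h => h1 ⟨ball_subset_ball (min_le_left _ _) hx, fun hxS => h (hSlevel hxS)⟩)
      (fun x hx h => by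
        have hxS : x ∈ S := by
          rw [hSU]; exact ⟨h2 (ball_subset_ball (min_le_right _ _) hx), h⟩
        exact ⟨(hSA x hxS).2, (hSB x hxS).2⟩)
      (hSA z hz).1 (hSB z hz).1
    obtain ⟨T, γ, γ', t₀, hT, g0, gT, gd, gc, gn, ht₀, gz, gz', gAB⟩ := final_glue A B hAopen hBopen
      hAconn.isPreconnected hBconn.isPreconnected hE a b z (c • gradient f z) ha hb
      (smul_ne_zero hc (hSreg z hz)) δ hδ hside
    have hmem : ∀ t ∈ Icc (0 : ℝ) 1, T * t ∈ Icc 0 T := fun t ht =>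
      ⟨mul_nonneg hT.le ht.1, mul_le_of_le_one_right hT.le ht.2⟩
    have hT0 : T * (t₀ / T) = t₀ := mul_div_cancel₀ _ hT.ne'
    have huniq : ∀ t ∈ Icc (0 : ℝ) 1, γ (T * t) ∈ S → t = t₀ / T := by
      intro t ht hS
      rw [eq_div_iff hT.ne', mul_comm]
      by_contra hne
      rcases gAB _ (hmem t ht) hne with h | h
      · exact (hSA _ hS).2 h
      · exact (hSB _ hS).2 h
    refine ⟨fun t => γ (T * t), fun t => T • γ' (T * t), by simpa using g0, by simpa using gT,
      ?_, ?_, ?_, ?_, ?_, ?_⟩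
    · intro t _
      have h : HasDerivAt (fun t : ℝ => T * t) T t := by simpa using (hasDerivAt_id t).const_mul T
      exact ((gd (T * t)).scomp t h).hasDerivWithinAt
    · exact ((gc.comp (continuous_const.mul continuous_id)).const_smul T).continuousOn
    · intro t ht
      exact smul_ne_zero hT.ne' (gn _ (hmem t ht))
    · intro t ht
      by_cases h : T * t = t₀
      · simp only [h, gz]; exact Or.inl (Or.inr hz)
      · rcases gAB _ (hmem t ht) h with h | h
        · exact Or.inl (Or.inl h)
        · exact Or.inr h
    · refine ⟨t₀ / T, ⟨⟨div_nonneg ht₀.1 hT.le, (div_le_one hT).2 ht₀.2⟩, ?_⟩, ?_⟩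
      · simp only [hT0, gz]; exact hz
      · rintro t ⟨ht, hS⟩
        exact huniq t ht hS
    · intro t ht hS
      have := huniq t ht hS
      subst this
      refine ⟨T * c, mul_ne_zero hT.ne' hc, ?_⟩
      simp only [hT0, gz, gz', smul_smul]
  · push Not at hE
    obtain ⟨v, hv⟩ := hE
    have hv0 : v ≠ 0 := by
      rintro rfl
      obtain ⟨c, hc⟩ := hv (gradient f z)
      exact hSreg z hz (by simpa using hc)
    have hab : b - a ≠ 0 := sub_ne_zero.2 fun h => hdisj.le_bot ⟨ha, h ▸ hb⟩
    obtain ⟨h1, h2⟩ := line_case hv0 hv hAopen hBopen hAconn.isPreconnected hBconn.isPreconnected hdisj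
      hSA hSB ha hb hz
    refine ⟨fun t => a + t • (b - a), fun _ => b - a, by simp, by simp, ?_, continuousOn_const,
      fun _ _ => hab, h1, h2, ?_⟩
    · intro t _
      have : HasDerivAt (fun t : ℝ => a + t • (b - a)) (b - a) t := by
        simpa using ((hasDerivAt_id t).smul_const (b - a)).const_add a
      exact this.hasDerivWithinAt
    · intro t _ hS
      have hg := hSreg _ hS
      obtain ⟨c, hc⟩ := hv (b - a)
      obtain ⟨d, hd⟩ := hv (gradient f (a + t • (b - a)))
      have hd0 : d ≠ 0 := by rintro rfl; exact hg (by simpa using hd)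
      have hc0 : c ≠ 0 := by rintro rfl; exact hab (by simpa using hc)
      refine ⟨c / d, div_ne_zero hc0 hd0, ?_⟩
      change b - a = (c / d) • gradient f (a + t • (b - a))
      rw [hd, smul_smul, div_mul_cancel₀ _ hd0]
      exact hc
end
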